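/- Let n ≥ 2 and p ≥ 1. Every isometry Φ of the p-Wasserstein space W_p(T^n) over the flat torus T^n is trivial: there exists an isometry ψ of T^n such that Φ(μ) = ψ_# μ for all μ ∈ W_p(T^n). Hence Isom(W_p(T^n)) is isomorphic to Isom(T^n). -/

import Mathlib

open MeasureTheory Filter

/-- The `p`-Wasserstein distance with cost function `c` (the distance of the
underlying space): infimum over couplings of `∫ c(x,y)^p dπ`, to the power `1/p`. -/
noncomputable def wassersteinDist {X : Type*} [MeasurableSpace X]
    (c : X → X → ℝ) (p : ℝ) (μ ν : Measure X) : ℝ :=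
  sInf {r : ℝ | ∃ π : Measure (X × X), IsProbabilityMeasure π ∧
      π.map Prod.fst = μ ∧ π.map Prod.snd = ν ∧
      r = ∫ q, c q.1 q.2 ^ p ∂π} ^ (1 / p)

/-- The flat `n`-dimensional torus `ℝ^n/ℤ^n`. -/
abbrev Torus (n : ℕ) := Fin n → AddCircle (1 : ℝ)

/-- The flat (ℓ²) metric on the torus: each coordinate distance is the
distance `|(x_k - y_k) mod 1|` on `ℝ/ℤ`. -/
noncomputable def torusDist {n : ℕ} (x y : Torus n) : ℝ :=
  Real.sqrt (∑ k, dist (x k) (y k) ^ 2)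

/-!
Every point `x` of the torus has a unique farthest point, its antipode. Hence two measures at the
maximal Wasserstein distance are both Dirac masses, so an isometry permutes the Dirac masses. The
permutation is an isometry `ψ` of the torus, and after composing with `ψ⁻¹` the isometry `Φ` fixes
every Dirac mass. It then preserves the integrals of all linear combinations of the functions
`y ↦ d(y, z) ^ p`.

It suffices that `Φ` fix the mixtures of `δ_x` and `δ_{antipode x}` in which `x` has small mass. An
optimal plan from `μ` to the mixture giving `x` the mass `μ {x}` leaves the atom at `x` in place and
moves the rest to the antipode. This saturates a bound which only measures with at least that much
mass at `x` attain, so `Φ` does not decrease small atoms. Measures that consist of finitely many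
small atoms are therefore fixed, and they are dense.

For `p ≠ 2` the mixtures are fixed because some linear combination of the functions
`y ↦ d(y, z) ^ p` attains its maximum exactly at `x` and its antipode: the sum over these two points
if `p > 2`, a mixed difference over four points, which exploits the strict concavity of
`t ↦ t ^ (p / 2)`, if `p < 2`. For `p = 2` the sum is maximal at the `2 ^ n` points whose
coordinates are those of `x` or of the antipode, which reduces the problem to the discrete cube
with the Hamming distance. There the laws of the single coordinates are preserved, and the task is
to show that the coordinates of a vertex distributed according to the image of a mixture agree
almost surely.
-/

namespace WassersteinTorus

open Function ProbabilityTheory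
open scoped Topology unitInterval

section Coupling

variable {Ω X Y : Type*} [MeasurableSpace Ω] [MeasurableSpace X] [MeasurableSpace Y]

/-- `π` is a coupling (a transport plan) of `μ` and `ν`: a probability measure on the product with
marginals `μ` and `ν`. -/
structure IsCoupling (π : Measure (X × Y)) (μ : Measure X) (ν : Measure Y) : Prop where
  isProbabilityMeasure : IsProbabilityMeasure π
  map_fst : π.map Prod.fst = μ
  map_snd : π.map Prod.snd = ν

lemma isCoupling_map (ρ : Measure Ω) [IsProbabilityMeasure ρ] {f : Ω → X} {g : Ω → Y}
    (hf : Measurable f) (hg : Measurable g) :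
    IsCoupling (ρ.map fun ω => (f ω, g ω)) (ρ.map f) (ρ.map g) where
  isProbabilityMeasure := Measure.isProbabilityMeasure_map (hf.prodMk hg).aemeasurable
  map_fst := Measure.map_map measurable_fst (hf.prodMk hg)
  map_snd := Measure.map_map measurable_snd (hf.prodMk hg)

lemma isCoupling_prod (μ : Measure X) (ν : Measure Y) [IsProbabilityMeasure μ]
    [IsProbabilityMeasure ν] : IsCoupling (μ.prod ν) μ ν :=
  ⟨inferInstance, by simp, by simp⟩

namespace IsCoupling

variable {π : Measure (X × Y)} {μ : Measure X} {ν : Measure Y}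

lemma ae_fst (h : IsCoupling π μ ν) {P : X → Prop} (hP : ∀ᵐ x ∂μ, P x) : ∀ᵐ q ∂π, P q.1 :=
  ae_of_ae_map measurable_fst.aemeasurable (h.map_fst ▸ hP)

lemma ae_snd (h : IsCoupling π μ ν) {P : Y → Prop} (hP : ∀ᵐ y ∂ν, P y) : ∀ᵐ q ∂π, P q.2 :=
  ae_of_ae_map measurable_snd.aemeasurable (h.map_snd ▸ hP)

lemma integral_comp_fst (h : IsCoupling π μ ν) {f : X → ℝ} (hf : AEStronglyMeasurable f μ) :
    ∫ q, f q.1 ∂π = ∫ x, f x ∂μ := by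
  obtain rfl := h.map_fst
  exact (integral_map measurable_fst.aemeasurable hf).symm

lemma integral_comp_snd (h : IsCoupling π μ ν) {g : Y → ℝ} (hg : AEStronglyMeasurable g ν) :
    ∫ q, g q.2 ∂π = ∫ y, g y ∂ν := by
  obtain rfl := h.map_snd
  exact (integral_map measurable_snd.aemeasurable hg).symm

lemma integrable_comp_fst (h : IsCoupling π μ ν) {f : X → ℝ} (hf : Integrable f μ) :
    Integrable (fun q => f q.1) π := by
  obtain rfl := h.map_fst
  exact hf.comp_measurable measurable_fst

lemma integrable_comp_snd (h : IsCoupling π μ ν) {g : Y → ℝ} (hg : Integrable g ν) :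
    Integrable (fun q => g q.2) π := by
  obtain rfl := h.map_snd
  exact hg.comp_measurable measurable_snd

end IsCoupling

/-- The optimal transport cost between `μ` and `ν` for the cost function `k`. For `k = c ^ p` it is
the `p`-th power of the `p`-Wasserstein distance. -/
noncomputable def transportCost (k : X → X → ℝ) (μ ν : Measure X) : ℝ :=
  sInf ((fun π : Measure (X × X) => ∫ q, k q.1 q.2 ∂π) '' {π | IsCoupling π μ ν})

lemma wassersteinDist_eq_transportCost_rpow (c : X → X → ℝ) (p : ℝ) (μ ν : Measure X) :
    wassersteinDist c p μ ν = transportCost (fun x y => c x y ^ p) μ ν ^ (1 / p) := by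
  unfold wassersteinDist transportCost
  congr 2
  ext r
  exact ⟨fun ⟨π, h, h₁, h₂, hr⟩ => ⟨π, ⟨h, h₁, h₂⟩, hr.symm⟩,
    fun ⟨π, h, hr⟩ => ⟨π, h.1, h.2, h.3, hr.symm⟩⟩

section Nonneg

variable {k : X → X → ℝ} {μ ν : Measure X}

lemma transportCost_nonneg (hk : ∀ x y, 0 ≤ k x y) : 0 ≤ transportCost k μ ν := by
  refine Real.sInf_nonneg ?_
  rintro _ ⟨π, -, rfl⟩
  exact integral_nonneg fun q => hk q.1 q.2

lemma transportCost_le (hk : ∀ x y, 0 ≤ k x y) {π : Measure (X × X)} (h : IsCoupling π μ ν) :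
    transportCost k μ ν ≤ ∫ q, k q.1 q.2 ∂π := by
  refine csInf_le ⟨0, ?_⟩ ⟨π, h, rfl⟩
  rintro _ ⟨π', -, rfl⟩
  exact integral_nonneg fun q => hk q.1 q.2

lemma transportCost_map_le (hk : ∀ x y, 0 ≤ k x y) (hkm : Measurable (uncurry k))
    (ρ : Measure Ω) [IsProbabilityMeasure ρ] {f g : Ω → X} (hf : Measurable f) (hg : Measurable g) :
    transportCost k (ρ.map f) (ρ.map g) ≤ ∫ ω, k (f ω) (g ω) ∂ρ := by
  refine (transportCost_le hk (isCoupling_map ρ hf hg)).trans_eq ?_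
  exact integral_map (hf.prodMk hg).aemeasurable hkm.aestronglyMeasurable

end Nonneg

section Bounds

variable {k : X → X → ℝ} {μ ν : Measure X} [IsProbabilityMeasure μ] [IsProbabilityMeasure ν] {r : ℝ}

lemma le_transportCost (h : ∀ π, IsCoupling π μ ν → r ≤ ∫ q, k q.1 q.2 ∂π) :
    r ≤ transportCost k μ ν := by
  refine le_csInf ⟨_, _, isCoupling_prod μ ν, rfl⟩ ?_
  rintro _ ⟨π, hπ, rfl⟩
  exact h π hπ

end Bounds

end Coupling

section ProbabilityMeasure

variable {X : Type*} [MeasurableSpace X] {μ ν : Measure X} [IsProbabilityMeasure μ]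

lemma integral_eq_iff_ae_eq_of_le {f : X → ℝ} {L : ℝ} (hf : Integrable f μ) (hle : ∀ x, f x ≤ L) :
    ∫ x, f x ∂μ = L ↔ ∀ᵐ x ∂μ, f x = L := by
  have h := integral_eq_iff_of_ae_le hf (integrable_const L) (.of_forall hle)
  rwa [integral_const, probReal_univ, one_smul] at h

lemma eq_dirac_of_ae_eq {x : X} (h : ∀ᵐ y ∂μ, y = x) : μ = Measure.dirac x := by
  have hid : μ.map id = μ.map (fun _ => x) := Measure.map_congr h
  rwa [Measure.map_id, Measure.map_const, measure_univ, one_smul] at hid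

variable [MeasurableSingletonClass X]

/-- No mass is lost on a finite set carrying `μ`, so domination of atoms forces equality. -/
lemma eq_of_measureReal_singleton_le [IsProbabilityMeasure ν] {S : Set X} (hS : S.Finite)
    (hμ : ∀ᵐ x ∂μ, x ∈ S) (h : ∀ x ∈ S, μ.real {x} ≤ ν.real {x}) : μ = ν := by
  refine Measure.eq_of_le_of_isProbabilityMeasure (Measure.le_iff.2 fun s _ => ?_)
  have hfin : (s ∩ S).Finite := hS.subset Set.inter_subset_right
  calc μ s = μ (s ∩ S) := by rw [Set.inter_comm, Measure.measure_inter_eq_of_ae hμ]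
    _ = ∑ x ∈ hfin.toFinset, μ {x} := by rw [sum_measure_singleton, hfin.coe_toFinset]
    _ ≤ ∑ x ∈ hfin.toFinset, ν {x} := Finset.sum_le_sum fun x hx =>
        (ENNReal.toReal_le_toReal (measure_ne_top _ _) (measure_ne_top _ _)).1
          (h x (hfin.mem_toFinset.1 hx).2)
    _ = ν (s ∩ S) := by rw [sum_measure_singleton, hfin.coe_toFinset]
    _ ≤ ν s := measure_mono Set.inter_subset_left

lemma eq_bernoulliMeasure {x y : X} (hμ : ∀ᵐ z ∂μ, z = x ∨ z = y) {f : X → ℝ} (hf : f x ≠ f y)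
    {m : I} (h : ∫ z, f z ∂μ = ∫ z, f z ∂Ber(x, y, m)) : μ = Ber(x, y, m) := by
  have hxy : x ≠ y := fun h => hf (congrArg f h)
  have hle : μ.real {x} + μ.real {y} ≤ 1 :=
    (measureReal_union (Set.disjoint_singleton.2 hxy) (.singleton y)).symm.trans_le
      measureReal_le_one
  obtain ⟨m', hm'⟩ : ∃ m' : I, (m' : ℝ) = μ.real {x} :=
    ⟨⟨μ.real {x}, measureReal_nonneg, measureReal_le_one⟩, rfl⟩
  have hμm' : μ = Ber(x, y, m') := by
    refine eq_of_measureReal_singleton_le (S := {x, y}) (Set.toFinite _) hμ ?_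
    rintro z (rfl | rfl)
    · simp [hxy.symm, hm']
    · simp only [MeasurableSet.singleton, Set.mem_singleton_iff, hxy, not_false_eq_true,
        bernoulliMeasure_real_apply_of_notMem_of_mem, hm']
      linarith
  rw [hμm', integral_bernoulliMeasure, integral_bernoulliMeasure] at h
  have hm : m' = m := Subtype.ext (mul_right_cancel₀ (sub_ne_zero.2 hf) (by
    simp only [smul_eq_mul] at h
    linear_combination h))
  rw [hμm', hm]

end ProbabilityMeasure

lemma ae_bernoulliMeasure {X : Type*} [MeasurableSpace X] [MeasurableSingletonClass X] {x y : X}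
    {m : I} {P : X → Prop} (hx : P x) (hy : P y) : ∀ᵐ z ∂Ber(x, y, m), P z := by
  refine ae_add_measure_iff.2 ⟨?_, ?_⟩ <;> refine Measure.ae_smul_measure ?_ _ <;>
    rwa [ae_dirac_eq, eventually_pure]

section Cost

variable {Ω X Y : Type*} [MeasurableSpace Ω] [MeasurableSpace X] [MeasurableSpace Y]
  {k : X → X → ℝ} {μ ν : Measure X}

/-- A measurable, nonnegative and bounded cost function; boundedness makes every transport plan have
finite cost. -/
structure IsCost (k : X → X → ℝ) : Prop where
  measurable : Measurable (uncurry k)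
  nonneg : ∀ x y, 0 ≤ k x y
  bounded : ∃ C, ∀ x y, k x y ≤ C

namespace IsCost

lemma integrable (hk : IsCost k) (ρ : Measure Ω) [IsFiniteMeasure ρ] {f g : Ω → X}
    (hf : Measurable f) (hg : Measurable g) : Integrable (fun ω => k (f ω) (g ω)) ρ := by
  obtain ⟨C, hC⟩ := hk.bounded
  refine .of_bound (hk.measurable.comp (hf.prodMk hg)).aestronglyMeasurable C
    (.of_forall fun ω => ?_)
  rw [Real.norm_of_nonneg (hk.nonneg _ _)]
  exact hC _ _

lemma integrable_left (hk : IsCost k) (μ : Measure X) [IsFiniteMeasure μ] (y : X) :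
    Integrable (fun x => k x y) μ :=
  hk.integrable μ measurable_id measurable_const

lemma const_mul (hk : IsCost k) {c : ℝ} (hc : 0 ≤ c) : IsCost fun x y => c * k x y where
  measurable := hk.measurable.const_mul c
  nonneg x y := mul_nonneg hc (hk.nonneg x y)
  bounded := hk.bounded.imp' (c * ·) fun _ hC x y => mul_le_mul_of_nonneg_left (hC x y) hc

lemma integral_add_integral_le_transportCost (hk : IsCost k) [IsProbabilityMeasure μ]
    [IsProbabilityMeasure ν] {f g : X → ℝ} (hf : Integrable f μ) (hg : Integrable g ν)
    {T : Set X} (hT : ∀ᵐ y ∂ν, y ∈ T) (h : ∀ x, ∀ y ∈ T, f x + g y ≤ k x y) :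
    ∫ x, f x ∂μ + ∫ y, g y ∂ν ≤ transportCost k μ ν := by
  refine le_transportCost fun π hπ => ?_
  have := hπ.isProbabilityMeasure
  have hf' := hπ.integrable_comp_fst hf
  have hg' := hπ.integrable_comp_snd hg
  calc ∫ x, f x ∂μ + ∫ y, g y ∂ν = ∫ q, (f q.1 + g q.2) ∂π := by
        rw [integral_add hf' hg', hπ.integral_comp_fst hf.1, hπ.integral_comp_snd hg.1]
    _ ≤ ∫ q, k q.1 q.2 ∂π :=
        integral_mono_ae (hf'.add hg') (hk.integrable π measurable_fst measurable_snd)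
          ((hπ.ae_snd hT).mono fun q hq => h q.1 q.2 hq)

variable [MeasurableSingletonClass X]

lemma transportCost_dirac_right (hk : IsCost k) (μ : Measure X) [IsProbabilityMeasure μ] (y : X) :
    transportCost k μ (Measure.dirac y) = ∫ x, k x y ∂μ := by
  refine le_antisymm ?_ ?_
  · have h := transportCost_map_le hk.nonneg hk.measurable μ measurable_id
      (measurable_const (a := y))
    rwa [Measure.map_id, Measure.map_const, measure_univ, one_smul] at h
  · have h := hk.integral_add_integral_le_transportCost (hk.integrable_left μ y)
      (integrable_zero X ℝ (Measure.dirac y)) (T := {y}) (by simp [ae_dirac_eq])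
      (by rintro x _ rfl; rw [Pi.zero_apply, add_zero])
    simpa only [Pi.zero_apply, integral_zero, add_zero] using h

lemma transportCost_dirac_dirac (hk : IsCost k) (x y : X) :
    transportCost k (Measure.dirac x) (Measure.dirac y) = k x y := by
  rw [hk.transportCost_dirac_right, integral_dirac]

end IsCost

lemma transportCost_const_mul {c : ℝ} (hc : 0 ≤ c) (k : X → X → ℝ) (μ ν : Measure X) :
    transportCost (fun x y => c * k x y) μ ν = c * transportCost k μ ν := by
  simp only [transportCost, sInf_image', integral_const_mul, Real.mul_iInf_of_nonneg hc]

lemma map_comap_of_ae_mem_range {e : Y → X} (he : MeasurableEmbedding e)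
    (hμ : ∀ᵐ x ∂μ, x ∈ Set.range e) : (μ.comap e).map e = μ := by
  rw [he.map_comap, Measure.restrict_eq_self_of_ae_mem hμ]

lemma isProbabilityMeasure_comap_of_ae_mem_range [IsProbabilityMeasure μ] {e : Y → X}
    (he : MeasurableEmbedding e) (hμ : ∀ᵐ x ∂μ, x ∈ Set.range e) :
    IsProbabilityMeasure (μ.comap e) := by
  refine ⟨?_⟩
  rw [he.comap_apply, Set.image_univ, ← prob_compl_eq_zero_iff he.measurableSet_range]
  exact hμ

/-- A coupling of two push-forwards along an embedding is carried by the image of the embedding,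
so it can be pulled back. -/
lemma IsCoupling.comap {e : Y → X} (he : MeasurableEmbedding e) {ρ ρ' : Measure Y}
    {π : Measure (X × X)} (hπ : IsCoupling π (ρ.map e) (ρ'.map e)) :
    IsCoupling (π.comap (Prod.map e e)) ρ ρ' ∧
      (π.comap (Prod.map e e)).map (Prod.map e e) = π := by
  have := hπ.isProbabilityMeasure
  have hE := he.prodMap he
  have hrange : ∀ᵐ q ∂π, q ∈ Set.range (Prod.map e e) := by
    filter_upwards [hπ.ae_fst (he.ae_map_iff.2 (.of_forall Set.mem_range_self)),
      hπ.ae_snd (he.ae_map_iff.2 (.of_forall Set.mem_range_self))] with q ⟨x, hx⟩ ⟨y, hy⟩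
    exact ⟨(x, y), Prod.ext hx hy⟩
  have hmap := map_comap_of_ae_mem_range hE hrange
  refine ⟨⟨isProbabilityMeasure_comap_of_ae_mem_range hE hrange, ?_, ?_⟩, hmap⟩
  · rw [← he.comap_map ((π.comap _).map _), Measure.map_map he.measurable measurable_fst,
      ← he.comap_map ρ, ← hπ.map_fst]
    nth_rw 2 [← hmap]
    rw [Measure.map_map measurable_fst hE.measurable]
    rfl
  · rw [← he.comap_map ((π.comap _).map _), Measure.map_map he.measurable measurable_snd,
      ← he.comap_map ρ', ← hπ.map_snd]
    nth_rw 2 [← hmap]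
    rw [Measure.map_map measurable_snd hE.measurable]
    rfl

lemma IsCost.transportCost_map (hk : IsCost k) {e : Y → X} (he : MeasurableEmbedding e)
    (ρ ρ' : Measure Y) [IsProbabilityMeasure ρ] [IsProbabilityMeasure ρ'] :
    transportCost k (ρ.map e) (ρ'.map e) = transportCost (fun x y => k (e x) (e y)) ρ ρ' := by
  have := Measure.isProbabilityMeasure_map (μ := ρ) he.measurable.aemeasurable
  have := Measure.isProbabilityMeasure_map (μ := ρ') he.measurable.aemeasurable
  refine le_antisymm (le_transportCost fun π hπ => ?_) (le_transportCost fun π hπ => ?_)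
  · have := hπ.isProbabilityMeasure
    have h := transportCost_map_le hk.nonneg hk.measurable π (he.measurable.comp measurable_fst)
      (he.measurable.comp measurable_snd)
    rwa [← Measure.map_map he.measurable measurable_fst,
      ← Measure.map_map he.measurable measurable_snd, hπ.map_fst, hπ.map_snd] at h
  · obtain ⟨hcoupling, hmap⟩ := hπ.comap he
    refine (transportCost_le (fun x y => hk.nonneg (e x) (e y)) hcoupling).trans_eq ?_
    conv_rhs => rw [← hmap, (he.prodMap he).integral_map]
    rfl

/-- `Φ` is an isometry of the space of probability measures on `X` onto itself, the role of the
distance being played by the optimal transport cost for `k`. -/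
structure IsTransportIsometry (k : X → X → ℝ) (Φ : Measure X → Measure X) : Prop where
  isProbabilityMeasure : ∀ μ, IsProbabilityMeasure μ → IsProbabilityMeasure (Φ μ)
  exists_eq : ∀ ν, IsProbabilityMeasure ν → ∃ μ, IsProbabilityMeasure μ ∧ Φ μ = ν
  transportCost_eq : ∀ μ ν, IsProbabilityMeasure μ → IsProbabilityMeasure ν →
    transportCost k (Φ μ) (Φ ν) = transportCost k μ ν

namespace IsTransportIsometry

variable {Φ : Measure X → Measure X}

lemma of_wassersteinDist_eq {c : X → X → ℝ} (hc : ∀ x y, 0 ≤ c x y) {p : ℝ} (hp : p ≠ 0)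
    (hbij : Set.BijOn Φ {μ : Measure X | IsProbabilityMeasure μ}
      {μ : Measure X | IsProbabilityMeasure μ})
    (hiso : ∀ μ ν : Measure X, IsProbabilityMeasure μ → IsProbabilityMeasure ν →
      wassersteinDist c p (Φ μ) (Φ ν) = wassersteinDist c p μ ν) :
    IsTransportIsometry (fun x y => c x y ^ p) Φ where
  isProbabilityMeasure := hbij.mapsTo
  exists_eq := hbij.surjOn
  transportCost_eq μ ν hμ hν := by
    have hcp (x y : X) : 0 ≤ c x y ^ p := Real.rpow_nonneg (hc x y) p
    have h := hiso μ ν hμ hν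
    rwa [wassersteinDist_eq_transportCost_rpow, wassersteinDist_eq_transportCost_rpow,
      Real.rpow_left_inj (transportCost_nonneg hcp) (transportCost_nonneg hcp)
        (one_div_ne_zero hp)] at h

lemma integral_eq [MeasurableSingletonClass X] (hΦ : IsTransportIsometry k Φ) (hk : IsCost k)
    (μ : Measure X) [IsProbabilityMeasure μ] {y : X} (hy : Φ (Measure.dirac y) = Measure.dirac y) :
    ∫ x, k x y ∂Φ μ = ∫ x, k x y ∂μ := by
  have := hΦ.isProbabilityMeasure μ inferInstance
  have h := hΦ.transportCost_eq μ (Measure.dirac y) inferInstance inferInstance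
  rwa [hy, hk.transportCost_dirac_right, hk.transportCost_dirac_right] at h

lemma integrable_and_integral_eq_of_mem_span [MeasurableSingletonClass X]
    (hΦ : IsTransportIsometry k Φ) (hk : IsCost k)
    (hdirac : ∀ x, Φ (Measure.dirac x) = Measure.dirac x) (μ : Measure X) [IsProbabilityMeasure μ]
    {g : X → ℝ} (hg : g ∈ Submodule.span ℝ (Set.range fun z y => k y z)) :
    Integrable g μ ∧ Integrable g (Φ μ) ∧ ∫ x, g x ∂Φ μ = ∫ x, g x ∂μ := by
  have := hΦ.isProbabilityMeasure μ inferInstance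
  induction hg using Submodule.span_induction with
  | mem g hg =>
    obtain ⟨z, rfl⟩ := hg
    exact ⟨hk.integrable_left μ z, hk.integrable_left (Φ μ) z, hΦ.integral_eq hk μ (hdirac z)⟩
  | zero => exact ⟨integrable_zero _ _ _, integrable_zero _ _ _, by simp⟩
  | add g g' _ _ h h' =>
    refine ⟨h.1.add h'.1, h.2.1.add h'.2.1, ?_⟩
    simp only [Pi.add_apply]
    rw [integral_add h.1 h'.1, integral_add h.2.1 h'.2.1, h.2.2, h'.2.2]
  | smul c g _ h =>
    refine ⟨h.1.smul c, h.2.1.smul c, ?_⟩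
    simp only [Pi.smul_apply]
    rw [integral_smul, integral_smul, h.2.2]

lemma of_const_mul {c : ℝ} (hc : 0 < c) (hΦ : IsTransportIsometry (fun x y => c * k x y) Φ) :
    IsTransportIsometry k Φ where
  isProbabilityMeasure := hΦ.isProbabilityMeasure
  exists_eq := hΦ.exists_eq
  transportCost_eq μ ν hμ hν := by
    have h := hΦ.transportCost_eq μ ν hμ hν
    rwa [transportCost_const_mul hc.le, transportCost_const_mul hc.le,
      mul_right_inj' hc.ne'] at h

lemma map_measurableEquiv (hΦ : IsTransportIsometry k Φ) (hk : IsCost k) (e : X ≃ᵐ X)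
    (he : ∀ x y, k (e x) (e y) = k x y) : IsTransportIsometry k fun μ => (Φ μ).map e where
  isProbabilityMeasure μ hμ :=
    have := hΦ.isProbabilityMeasure μ hμ
    Measure.isProbabilityMeasure_map e.measurable.aemeasurable
  exists_eq ν hν := by
    obtain ⟨μ, hμ, h⟩ := hΦ.exists_eq (ν.map e.symm)
      (Measure.isProbabilityMeasure_map e.symm.measurable.aemeasurable)
    exact ⟨μ, hμ, by rw [h, e.map_map_symm]⟩
  transportCost_eq μ ν hμ hν := by
    have := hΦ.isProbabilityMeasure μ hμ
    have := hΦ.isProbabilityMeasure ν hν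
    simp only [hk.transportCost_map e.measurableEmbedding, he, hΦ.transportCost_eq μ ν hμ hν]

lemma comap (hΦ : IsTransportIsometry k Φ) (hk : IsCost k) {e : Y → X} (he : MeasurableEmbedding e)
    (hrange : ∀ μ, IsProbabilityMeasure μ →
      ((∀ᵐ x ∂Φ μ, x ∈ Set.range e) ↔ ∀ᵐ x ∂μ, x ∈ Set.range e)) :
    IsTransportIsometry (fun x y => k (e x) (e y)) fun ρ => (Φ (ρ.map e)).comap e := by
  have hprob (ρ : Measure Y) (hρ : IsProbabilityMeasure ρ) : IsProbabilityMeasure (ρ.map e) :=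
    Measure.isProbabilityMeasure_map he.measurable.aemeasurable
  have hΦrange (ρ : Measure Y) (hρ : IsProbabilityMeasure ρ) :
      ∀ᵐ x ∂Φ (ρ.map e), x ∈ Set.range e :=
    (hrange _ (hprob ρ hρ)).2 (he.ae_map_iff.2 (.of_forall Set.mem_range_self))
  have hΨ (ρ : Measure Y) (hρ : IsProbabilityMeasure ρ) :
      IsProbabilityMeasure ((Φ (ρ.map e)).comap e) :=
    have := hΦ.isProbabilityMeasure _ (hprob ρ hρ)
    isProbabilityMeasure_comap_of_ae_mem_range he (hΦrange ρ hρ)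
  refine ⟨hΨ, fun ρ hρ => ?_, fun ρ ρ' hρ hρ' => ?_⟩
  · obtain ⟨μ, hμ, h⟩ := hΦ.exists_eq (ρ.map e) (hprob ρ hρ)
    have hμrange : ∀ᵐ x ∂μ, x ∈ Set.range e :=
      (hrange μ hμ).1 (h ▸ he.ae_map_iff.2 (.of_forall Set.mem_range_self))
    refine ⟨μ.comap e, isProbabilityMeasure_comap_of_ae_mem_range he hμrange, ?_⟩
    rw [map_comap_of_ae_mem_range he hμrange, h, he.comap_map]
  · have := hΨ ρ hρ
    have := hΨ ρ' hρ'
    rw [← hk.transportCost_map he, map_comap_of_ae_mem_range he (hΦrange ρ hρ),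
      map_comap_of_ae_mem_range he (hΦrange ρ' hρ'),
      hΦ.transportCost_eq _ _ (hprob ρ hρ) (hprob ρ' hρ'), hk.transportCost_map he]

end IsTransportIsometry

end Cost

lemma measureReal_singleton_map_prod_uniformOn_le {ι X Y : Type*} [MeasurableSpace X]
    [MeasurableSpace Y] [MeasurableSingletonClass Y] [Fintype ι] [Nonempty ι] [MeasurableSpace ι]
    [MeasurableSingletonClass ι] (μ : Measure X) [IsProbabilityMeasure μ] {g : X × ι → Y}
    (hg : Measurable g) (hinj : ∀ x, Injective fun j => g (x, j)) (y : Y) :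
    ((μ.prod (uniformOn Set.univ)).map g).real {y} ≤ 1 / (Fintype.card ι : ℝ) := by
  have hsection (x : X) :
      uniformOn Set.univ (Prod.mk x ⁻¹' (g ⁻¹' {y})) ≤ (Fintype.card ι : ENNReal)⁻¹ := by
    have hsub : (Prod.mk x ⁻¹' (g ⁻¹' {y})).Subsingleton := fun i hi j hj =>
      hinj x (hi.trans hj.symm)
    rw [uniformOn_univ, div_eq_mul_inv]
    refine mul_le_of_le_one_left' ?_
    rw [Measure.count_apply (Set.toFinite _).measurableSet]
    exact_mod_cast Set.encard_le_one_iff.2 fun i j hi hj => hsub hi hj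
  have hle : ((μ.prod (uniformOn Set.univ)).map g) {y} ≤ (Fintype.card ι : ENNReal)⁻¹ := by
    rw [Measure.map_apply hg (.singleton y), Measure.prod_apply (hg (.singleton y))]
    refine (lintegral_mono hsection).trans_eq ?_
    rw [lintegral_const, measure_univ, mul_one]
  refine (ENNReal.toReal_mono (ENNReal.inv_ne_top.2 (by simp)) hle).trans_eq ?_
  rw [ENNReal.toReal_inv, ENNReal.toReal_natCast, one_div]

lemma abs_integral_sub_integral_le {X : Type*} [MeasurableSpace X] {k : X → X → ℝ}
    (hk : IsCost k) {μ ν : Measure X} [IsProbabilityMeasure μ] [IsProbabilityMeasure ν]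
    {f : X → ℝ} (hfμ : Integrable f μ) (hfν : Integrable f ν) {e K : ℝ} (hK : 0 ≤ K)
    (h : ∀ x y, |f x - f y| ≤ e + K * k x y) :
    |∫ x, f x ∂μ - ∫ x, f x ∂ν| ≤ e + K * transportCost k μ ν := by
  have hdual {g : X → ℝ} (hgμ : Integrable g μ) (hgν : Integrable g ν)
      (hg : ∀ x y, g x - g y ≤ e + K * k x y) :
      ∫ x, g x ∂μ - ∫ x, g x ∂ν ≤ e + K * transportCost k μ ν := by
    have h := (hk.const_mul hK).integral_add_integral_le_transportCost
      (hgμ.sub (integrable_const e)) hgν.neg (T := Set.univ) (by simp)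
      fun x y _ => by simp only [Pi.sub_apply, Pi.neg_apply]; linarith [hg x y]
    simp only [Pi.sub_apply, Pi.neg_apply] at h
    rw [transportCost_const_mul hK, integral_sub hgμ (integrable_const e), integral_neg,
      integral_const, probReal_univ, one_smul] at h
    linarith
  refine abs_sub_le_iff.2 ⟨hdual hfμ hfν fun x y => (le_abs_self _).trans (h x y), ?_⟩
  have hneg := hdual hfμ.neg hfν.neg fun x y => by
    simp only [Pi.neg_apply]
    linarith [neg_le_abs (f x - f y), h x y]
  simp only [Pi.neg_apply, integral_neg] at hneg
  linarith

section Approximation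

variable {X : Type*} [MetricSpace X] [CompactSpace X]

lemma exists_pos_forall_dist_lt_imp_le {k : X → X → ℝ} (hk : Continuous (uncurry k))
    (hself : ∀ x, k x x = 0) {δ : ℝ} (hδ : 0 < δ) : ∃ r > 0, ∀ x y, dist x y < r → k x y ≤ δ := by
  obtain ⟨r, hr, h⟩ :=
    Metric.uniformContinuous_iff.1 (CompactSpace.uniformContinuous_of_continuous hk) δ hδ
  refine ⟨r, hr, fun x y hxy => ?_⟩
  have hdist : dist (x, y) (x, x) < r := by
    rwa [Prod.dist_eq, dist_self, max_eq_right dist_nonneg, dist_comm]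
  have hlt := h hdist
  rw [uncurry_apply_pair, uncurry_apply_pair, hself, Real.dist_0_eq_abs] at hlt
  exact (le_abs_self _).trans hlt.le

lemma exists_abs_sub_le_add_mul {k : X → X → ℝ} (hk : Continuous (uncurry k))
    (hnonneg : ∀ x y, 0 ≤ k x y) (hzero : ∀ x y, k x y = 0 → x = y)
    (f : BoundedContinuousFunction X ℝ) {e : ℝ} (he : 0 < e) :
    ∃ K, 0 ≤ K ∧ ∀ x y, |f x - f y| ≤ e + K * k x y := by
  have hcpt : IsCompact {q : X × X | e ≤ |f q.1 - f q.2|} :=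
    (isClosed_le continuous_const (by fun_prop)).isCompact
  have hpos : ∀ q ∈ {q : X × X | e ≤ |f q.1 - f q.2|}, 0 < uncurry k q := by
    rintro ⟨x, y⟩ hq
    refine (hnonneg x y).lt_of_ne' fun h => ?_
    rw [Set.mem_ofPred_eq, hzero x y h, sub_self, abs_zero] at hq
    exact hq.not_gt he
  obtain ⟨c, hc, hle⟩ := hcpt.exists_forall_le' hk.continuousOn hpos
  refine ⟨2 * ‖f‖ / c, by positivity, fun x y => ?_⟩
  rcases le_total e |f x - f y| with h | h
  · calc |f x - f y| ≤ 2 * ‖f‖ := f.dist_le_two_norm x y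
      _ = 2 * ‖f‖ / c * c := (div_mul_cancel₀ _ hc.ne').symm
      _ ≤ 2 * ‖f‖ / c * k x y := by gcongr; exact hle (x, y) h
      _ ≤ e + 2 * ‖f‖ / c * k x y := le_add_of_nonneg_left he.le
  · exact h.trans (le_add_of_nonneg_right (mul_nonneg (by positivity) (hnonneg x y)))

variable [MeasurableSpace X] [BorelSpace X]

lemma exists_simpleFunc_dist_lt {r : ℝ} (hr : 0 < r) :
    ∃ T : SimpleFunc X X, ∀ x, dist (T x) x < r := by
  cases isEmpty_or_nonempty X
  · exact ⟨⟨id, fun x => isEmptyElim x, Set.toFinite _⟩, fun x => isEmptyElim x⟩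
  obtain ⟨e, he⟩ := TopologicalSpace.exists_dense_seq X
  have hcover : Set.univ ⊆ ⋃ i, Metric.ball (e i) r := fun x _ =>
    Set.mem_iUnion.2 (he.exists_dist_lt x hr)
  obtain ⟨t, ht⟩ := isCompact_univ.elim_finite_subcover _ (fun i => Metric.isOpen_ball) hcover
  refine ⟨SimpleFunc.nearestPt e (t.sup id), fun x => ?_⟩
  obtain ⟨i, hi, hix⟩ := Set.mem_iUnion₂.1 (ht (Set.mem_univ x))
  rw [Metric.mem_ball, dist_comm, ← ENNReal.ofReal_lt_ofReal_iff hr, ← edist_dist] at hix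
  rw [← ENNReal.ofReal_lt_ofReal_iff hr, ← edist_dist]
  exact (SimpleFunc.edist_nearestPt_le e x (Finset.le_sup (f := id) hi)).trans_lt hix

/-- Push each cell of a fine partition uniformly onto many points of a small ball. -/
lemma exists_finite_support_transportCost_le [PerfectSpace X] {k : X → X → ℝ} (hk : IsCost k)
    (hkc : Continuous (uncurry k)) (hself : ∀ x, k x x = 0) (μ : Measure X) [IsProbabilityMeasure μ]
    {ε δ : ℝ} (hε : 0 < ε) (hδ : 0 < δ) :
    ∃ ρ, IsProbabilityMeasure ρ ∧ (∃ S : Set X, S.Finite ∧ ∀ᵐ x ∂ρ, x ∈ S) ∧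
      (∀ x, ρ.real {x} ≤ ε) ∧ transportCost k μ ρ ≤ δ := by
  obtain ⟨r, hr, hkr⟩ := exists_pos_forall_dist_lt_imp_le hkc hself hδ
  obtain ⟨N, hN⟩ := exists_nat_one_div_lt hε
  obtain ⟨T, hT⟩ := exists_simpleFunc_dist_lt (X := X) (half_pos hr)
  have hball (z : X) : ∃ v : Fin (N + 1) → X, Injective v ∧ ∀ j, dist (v j) z < r / 2 := by
    have hinf := infinite_of_mem_nhds z (Metric.ball_mem_nhds z (half_pos hr))
    exact ⟨fun j => hinf.natEmbedding _ j, Subtype.val_injective.comp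
      ((hinf.natEmbedding _).injective.comp Fin.val_injective), fun j => (hinf.natEmbedding _ j).2⟩
  choose v hv hvdist using hball
  let g : X × Fin (N + 1) → X := fun q => v (T q.1) q.2
  have hg : Measurable g :=
    measurable_from_prod_countable_left fun j => (T.map fun z => v z j).measurable
  have hdist (q : X × Fin (N + 1)) : dist q.1 (g q) < r := by
    have h₁ := hT q.1
    have h₂ := hvdist (T q.1) q.2
    rw [dist_comm] at h₁ h₂
    linarith [dist_triangle q.1 (T q.1) (g q)]
  have hfin : (Set.range g).Finite := by
    refine ((T.finite_range.prod Set.finite_univ).image fun q => v q.1 q.2).subset ?_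
    rintro _ ⟨q, rfl⟩
    exact ⟨(T q.1, q.2), ⟨⟨q.1, rfl⟩, trivial⟩, rfl⟩
  refine ⟨(μ.prod (uniformOn Set.univ)).map g, Measure.isProbabilityMeasure_map hg.aemeasurable,
    ⟨Set.range g, hfin, ae_map_mem_range g hfin.measurableSet _⟩, fun x => ?_, ?_⟩
  · refine (measureReal_singleton_map_prod_uniformOn_le μ hg (fun x => hv (T x)) x).trans ?_
    rw [Fintype.card_fin, Nat.cast_add_one]
    exact hN.le
  · have h := transportCost_map_le hk.nonneg hk.measurable (μ.prod (uniformOn Set.univ))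
      measurable_fst hg
    rw [Measure.map_fst_prod, measure_univ, one_smul] at h
    refine h.trans ((integral_mono (hk.integrable _ measurable_fst hg) (integrable_const δ)
      fun q => hkr _ _ (hdist q)).trans_eq ?_)
    rw [integral_const, probReal_univ, one_smul]

lemma eq_of_forall_exists_transportCost_le {k : X → X → ℝ} (hk : IsCost k)
    (hkc : Continuous (uncurry k)) (hzero : ∀ x y, k x y = 0 → x = y) {μ ν : Measure X}
    [IsProbabilityMeasure μ] [IsProbabilityMeasure ν]
    (h : ∀ δ > 0, ∃ ρ, IsProbabilityMeasure ρ ∧ transportCost k μ ρ ≤ δ ∧ transportCost k ν ρ ≤ δ) :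
    μ = ν := by
  refine ext_of_forall_integral_eq_of_IsFiniteMeasure fun f => ?_
  refine eq_of_forall_dist_le fun e he => ?_
  obtain ⟨K, hK, hf⟩ := exists_abs_sub_le_add_mul hkc hk.nonneg hzero f (by positivity : 0 < e / 4)
  obtain ⟨ρ, hρ, hμρ, hνρ⟩ := h (e / (4 * (K + 1))) (by positivity)
  have hKe : K * (e / (4 * (K + 1))) ≤ e / 4 := by
    rw [mul_div_assoc', div_le_div_iff₀ (by positivity) (by positivity)]
    linarith
  have hle (η : Measure X) [IsProbabilityMeasure η]
      (hηρ : transportCost k η ρ ≤ e / (4 * (K + 1))) :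
      dist (∫ x, f x ∂η) (∫ x, f x ∂ρ) ≤ e / 2 := by
    refine (abs_integral_sub_integral_le hk (f.integrable η) (f.integrable ρ) hK hf).trans ?_
    linarith [mul_le_mul_of_nonneg_left hηρ hK]
  linarith [dist_triangle_right (∫ x, f x ∂μ) (∫ x, f x ∂ν) (∫ x, f x ∂ρ), hle μ hμρ, hle ν hνρ]

end Approximation

lemma le_measureReal_le_zero_of_forall_pos {X : Type*} [MeasurableSpace X] {ν : Measure X}
    [IsProbabilityMeasure ν] {φ : X → ℝ} (hφ : Measurable φ) {m : ℝ}
    (h : ∀ δ > 0, m ≤ ν.real {y | φ y ≤ δ}) : m ≤ ν.real {y | φ y ≤ 0} := by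
  have := Measure.isProbabilityMeasure_map (μ := ν) hφ.aemeasurable
  have hcdf (δ : ℝ) : cdf (ν.map φ) δ = ν.real {y | φ y ≤ δ} := by
    rw [cdf_eq_real, map_measureReal_apply hφ measurableSet_Iic]
    rfl
  have hlim :=
    ((cdf (ν.map φ)).right_continuous 0).mono_left (nhdsWithin_mono 0 Set.Ioi_subset_Ici_self)
  simp only [← hcdf] at h ⊢
  exact ge_of_tendsto hlim (eventually_mem_nhdsWithin.mono h)

lemma map_piecewise_const {X Y : Type*} [MeasurableSpace X] [MeasurableSpace Y]
    [MeasurableSingletonClass Y] {μ : Measure X} [IsProbabilityMeasure μ] {s : Set X}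
    [DecidablePred (· ∈ s)] (hs : MeasurableSet s) {x y : Y} (hxy : x ≠ y) {m : I}
    (hm : (m : ℝ) = μ.real s) :
    μ.map (s.piecewise (fun _ => x) fun _ => y) = Ber(x, y, m) := by
  have hg : Measurable (s.piecewise (fun _ => x) fun _ => y) :=
    measurable_const.piecewise hs measurable_const
  have := Measure.isProbabilityMeasure_map (μ := μ) hg.aemeasurable
  have hpre : s.piecewise (fun _ => x) (fun _ => y) ⁻¹' {x} = s := by
    ext z
    by_cases hz : z ∈ s <;> simp [hz, hxy.symm]
  refine eq_bernoulliMeasure (f := Set.indicator {x} 1) ?_ (by simp [hxy.symm]) ?_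
  · have hxymeas := (Set.toFinite {x, y}).measurableSet
    refine (ae_map_iff hg.aemeasurable hxymeas).2 (.of_forall fun z => ?_)
    by_cases hz : z ∈ s
    · exact .inl (s.piecewise_eq_of_mem _ _ hz)
    · exact .inr (s.piecewise_eq_of_notMem _ _ hz)
  · rw [integral_indicator_one (.singleton x), map_measureReal_apply hg (.singleton x), hpre, ← hm,
      integral_bernoulliMeasure]
    simp [hxy.symm]

section Antipodal

variable {X : Type*} {k : X → X → ℝ} {a : X → X} {M : ℝ}

/-- A continuous symmetric cost, vanishing exactly on the diagonal, for which every point `x` has a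
unique farthest point `a x`, at cost `M` independent of `x`. -/
structure IsAntipodalCost [TopologicalSpace X] (k : X → X → ℝ) (a : X → X) (M : ℝ) : Prop where
  continuous : Continuous (uncurry k)
  symm : ∀ x y, k x y = k y x
  nonneg : ∀ x y, 0 ≤ k x y
  eq_zero_iff : ∀ x y, k x y = 0 ↔ x = y
  le : ∀ x y, k x y ≤ M
  eq_iff : ∀ x y, k x y = M ↔ y = a x
  pos : 0 < M

namespace IsAntipodalCost

lemma self [TopologicalSpace X] (hk : IsAntipodalCost k a M) (x : X) : k x x = 0 :=
  (hk.eq_zero_iff x x).2 rfl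

lemma apply_antipode [TopologicalSpace X] (hk : IsAntipodalCost k a M) (x : X) : k x (a x) = M :=
  (hk.eq_iff x (a x)).2 rfl

lemma ne_antipode [TopologicalSpace X] (hk : IsAntipodalCost k a M) (x : X) : x ≠ a x := fun h =>
  hk.pos.ne (by rw [← hk.apply_antipode x, ← h, hk.self])

lemma continuous_left [TopologicalSpace X] (hk : IsAntipodalCost k a M) (y : X) :
    Continuous fun x => k x y :=
  hk.continuous.comp (continuous_id.prodMk continuous_const)

lemma continuous_of_forall_eq [TopologicalSpace X] [CompactSpace X] (hk : IsAntipodalCost k a M)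
    {ψ : X → X} (hψ : ∀ x y, k (ψ x) (ψ y) = k x y) : Continuous ψ := by
  refine continuous_iff_continuousAt.2 fun x => le_nhds_of_unique_clusterPt fun y hy => ?_
  have hkx : Tendsto (fun z => k (ψ z) (ψ x)) (𝓝 x) (𝓝 0) := by
    simp only [hψ, ← hk.self x]
    exact (hk.continuous_left x).tendsto x
  have hcluster : MapClusterPt (k y (ψ x)) (𝓝 x) fun z => k (ψ z) (ψ x) :=
    MapClusterPt.continuousAt_comp (hk.continuous_left (ψ x)).continuousAt hy
  have hbot : (𝓝 (k y (ψ x)) ⊓ 𝓝 0).NeBot := NeBot.mono hcluster (inf_le_inf_left _ hkx)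
  exact (hk.eq_zero_iff _ _).1 (eq_of_nhds_neBot hbot)

variable [MetricSpace X] [CompactSpace X] [MeasurableSpace X] [BorelSpace X]

lemma isCost (hk : IsAntipodalCost k a M) : IsCost k where
  measurable := hk.continuous.measurable
  nonneg := hk.nonneg
  bounded := ⟨M, hk.le⟩

/-- The plan leaves the atom of `μ` at `x` in place and moves all other mass to the antipode. -/
lemma transportCost_bernoulliMeasure_le (hk : IsAntipodalCost k a M) (μ : Measure X)
    [IsProbabilityMeasure μ] (x : X) {m : I} (hm : (m : ℝ) = μ.real {x}) :
    transportCost k μ Ber(x, a x, m) ≤ ∫ y, k y (a x) ∂μ - m * M := by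
  classical
  let g : X → X := ({x} : Set X).piecewise (fun _ => x) fun _ => a x
  have hg : Measurable g := measurable_const.piecewise (.singleton x) measurable_const
  have hkg (y : X) : k y (g y) = k y (a x) - Set.indicator {x} (fun _ => M) y := by
    by_cases hy : y = x
    · subst hy
      simp [g, hk.self, hk.apply_antipode]
    · simp [g, hy]
  have h := transportCost_map_le hk.nonneg hk.isCost.measurable μ measurable_id hg
  rw [Measure.map_id, map_piecewise_const (.singleton x) (hk.ne_antipode x) hm] at h
  refine h.trans_eq ?_
  simp only [id_eq, hkg]
  rw [integral_sub (hk.isCost.integrable_left μ _)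
    ((integrable_const M).indicator (.singleton x)), integral_indicator_const _ (.singleton x), hm,
    smul_eq_mul]

/-- The dual potentials are `k y (a x) - δ 1_S y` and `(δ - M) 1_{x} z`, where `S` is the set in the
statement; as `δ → 0` it shrinks to `{x}`. -/
lemma mul_le_transportCost_bernoulliMeasure (hk : IsAntipodalCost k a M) (ν : Measure X)
    [IsProbabilityMeasure ν] (x : X) (m : I) {δ : ℝ} (hδ : 0 ≤ δ) :
    ∫ y, k y (a x) ∂ν - m * M + δ * (m - ν.real {y | M - k y (a x) + k y x ≤ δ}) ≤
      transportCost k ν Ber(x, a x, m) := by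
  set S : Set X := {y | M - k y (a x) + k y x ≤ δ}
  have hleft := hk.continuous_left
  have hS : MeasurableSet S := (isClosed_le (by fun_prop) continuous_const).measurableSet
  have hSint : Integrable (S.indicator fun _ => δ) ν := (integrable_const δ).indicator hS
  have hne := hk.ne_antipode x
  have hfeasible : ∀ y, ∀ z ∈ ({x, a x} : Set X),
      k y (a x) - S.indicator (fun _ => δ) y + Set.indicator {x} (fun _ => δ - M) z ≤ k y z := by
    rintro y z (rfl | rfl)
    · rw [Set.indicator_of_mem (Set.mem_singleton z)]
      by_cases hy : y ∈ S
      · rw [Set.indicator_of_mem hy]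
        linarith [hk.le y (a z), hk.nonneg y z]
      · rw [Set.indicator_of_notMem hy]
        have hy' : δ < M - k y (a z) + k y z := not_le.1 hy
        linarith
    · rw [Set.indicator_of_notMem (Set.notMem_singleton_iff.2 hne.symm)]
      linarith [Set.indicator_nonneg (s := S) (f := fun _ => δ) (fun _ _ => hδ) y]
  have hsupport : ∀ᵐ z ∂Ber(x, a x, m), z ∈ ({x, a x} : Set X) :=
    ae_bernoulliMeasure (by simp) (by simp)
  have h := hk.isCost.integral_add_integral_le_transportCost
    ((hk.isCost.integrable_left ν (a x)).sub hSint)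
    ((integrable_const (δ - M)).indicator (.singleton x)) hsupport hfeasible
  simp only [Pi.sub_apply] at h
  rw [integral_sub (hk.isCost.integrable_left ν _) hSint, integral_indicator_const _ hS,
    integral_bernoulliMeasure] at h
  simp only [Set.mem_singleton_iff, Set.indicator_of_mem, hne.symm, not_false_eq_true,
    Set.indicator_of_notMem, smul_eq_mul] at h
  linarith

lemma le_measureReal_singleton (hk : IsAntipodalCost k a M) {ν : Measure X}
    [IsProbabilityMeasure ν] {x : X} {m : I}
    (h : transportCost k ν Ber(x, a x, m) ≤ ∫ y, k y (a x) ∂ν - m * M) :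
    (m : ℝ) ≤ ν.real {x} := by
  have hφ : Measurable fun y => M - k y (a x) + k y x :=
    have hleft := hk.continuous_left
    Continuous.measurable (by fun_prop)
  have hle : (m : ℝ) ≤ ν.real {y | M - k y (a x) + k y x ≤ 0} := by
    refine le_measureReal_le_zero_of_forall_pos hφ fun δ hδ => ?_
    have hdual := hk.mul_le_transportCost_bernoulliMeasure ν x m hδ.le
    exact sub_nonpos.1 (nonpos_of_mul_nonpos_right (by linarith) hδ)
  refine hle.trans (measureReal_mono fun y (hy : M - k y (a x) + k y x ≤ 0) => ?_)
  exact (hk.eq_zero_iff y x).1 (le_antisymm (by linarith [hk.le y (a x)]) (hk.nonneg y x))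

lemma exists_eq_dirac_of_transportCost_eq (hk : IsAntipodalCost k a M) {μ ν : Measure X}
    [IsProbabilityMeasure μ] [IsProbabilityMeasure ν] (h : transportCost k μ ν = M) :
    ∃ y, ν = Measure.dirac y := by
  have hint := hk.isCost.integrable (μ.prod ν) measurable_fst measurable_snd
  have hM : ∫ q, k q.1 q.2 ∂μ.prod ν = M := by
    refine le_antisymm ?_ (h ▸ transportCost_le hk.nonneg (isCoupling_prod μ ν))
    refine (integral_mono hint (integrable_const M) fun q => hk.le q.1 q.2).trans_eq ?_
    rw [integral_const, probReal_univ, one_smul]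
  have hae := (integral_eq_iff_ae_eq_of_le hint fun q => hk.le q.1 q.2).1 hM
  obtain ⟨x, hx⟩ := (Measure.ae_ae_of_ae_prod hae).exists
  exact ⟨a x, eq_dirac_of_ae_eq (hx.mono fun y hy => (hk.eq_iff x y).1 hy)⟩

section Isometry

variable {Φ : Measure X → Measure X}

lemma exists_isTransportIsometry_dirac_eq (hk : IsAntipodalCost k a M)
    (hΦ : IsTransportIsometry k Φ) :
    ∃ ψ : X → X, Surjective ψ ∧ ∀ x, Φ (Measure.dirac x) = Measure.dirac (ψ x) := by
  have himage (x : X) : ∃ y, Φ (Measure.dirac x) = Measure.dirac y := by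
    have := hΦ.isProbabilityMeasure (Measure.dirac x) inferInstance
    have := hΦ.isProbabilityMeasure (Measure.dirac (a x)) inferInstance
    refine hk.exists_eq_dirac_of_transportCost_eq (μ := Φ (Measure.dirac (a x))) ?_
    rw [hΦ.transportCost_eq _ _ inferInstance inferInstance, hk.isCost.transportCost_dirac_dirac,
      hk.symm, hk.apply_antipode]
  choose ψ hψ using himage
  refine ⟨ψ, fun y => ?_, hψ⟩
  obtain ⟨μ, hμ, hμy⟩ := hΦ.exists_eq (Measure.dirac y) inferInstance
  obtain ⟨μ', hμ', hμ'y⟩ := hΦ.exists_eq (Measure.dirac (a y)) inferInstance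
  obtain ⟨x, rfl⟩ := hk.exists_eq_dirac_of_transportCost_eq (μ := μ') (ν := μ) (by
    rw [← hΦ.transportCost_eq _ _ hμ' hμ, hμy, hμ'y, hk.isCost.transportCost_dirac_dirac, hk.symm,
      hk.apply_antipode])
  exact ⟨x, injective_dirac ((hψ x).symm.trans hμy)⟩

lemma measureReal_singleton_le_of_bernoulliMeasure_eq (hk : IsAntipodalCost k a M)
    (hΦ : IsTransportIsometry k Φ) (hdirac : ∀ x, Φ (Measure.dirac x) = Measure.dirac x)
    (μ : Measure X) [IsProbabilityMeasure μ] {x : X} {m : I} (hm : (m : ℝ) = μ.real {x})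
    (hber : Φ Ber(x, a x, m) = Ber(x, a x, m)) : μ.real {x} ≤ (Φ μ).real {x} := by
  have := hΦ.isProbabilityMeasure μ inferInstance
  rw [← hm]
  refine hk.le_measureReal_singleton ?_
  rw [hΦ.integral_eq hk.isCost μ (hdirac _), ← hber,
    hΦ.transportCost_eq _ _ inferInstance inferInstance]
  exact hk.transportCost_bernoulliMeasure_le μ x hm

lemma eq_self_of_bernoulliMeasure_eq [PerfectSpace X] (hk : IsAntipodalCost k a M)
    (hΦ : IsTransportIsometry k Φ) (hdirac : ∀ x, Φ (Measure.dirac x) = Measure.dirac x)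
    {ε : ℝ} (hε : 0 < ε) (hber : ∀ x (m : I), m ≤ ε → Φ Ber(x, a x, m) = Ber(x, a x, m))
    (μ : Measure X) [IsProbabilityMeasure μ] : Φ μ = μ := by
  have := hΦ.isProbabilityMeasure μ inferInstance
  refine eq_of_forall_exists_transportCost_le hk.isCost hk.continuous
    (fun x y => (hk.eq_zero_iff x y).1) fun δ hδ => ?_
  obtain ⟨ρ, hρ, ⟨S, hS, hρS⟩, hatom, hle⟩ :=
    exists_finite_support_transportCost_le hk.isCost hk.continuous hk.self μ hε hδ
  have := hΦ.isProbabilityMeasure ρ hρ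
  have hfix : ρ = Φ ρ := eq_of_measureReal_singleton_le hS hρS fun x _ =>
    hk.measureReal_singleton_le_of_bernoulliMeasure_eq hΦ hdirac ρ
      (m := ⟨ρ.real {x}, measureReal_nonneg, measureReal_le_one⟩) rfl (hber x _ (hatom x))
  refine ⟨ρ, hρ, ?_, hle⟩
  rwa [hfix, hΦ.transportCost_eq μ ρ inferInstance hρ]

/-- A maximal integral of `g` confines `Φ Ber(x, a x, m)` to `{x, a x}`; its transport cost to
`dirac (a x)` then gives the weight. -/
lemma bernoulliMeasure_eq_of_mem_span (hk : IsAntipodalCost k a M) (hΦ : IsTransportIsometry k Φ)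
    (hdirac : ∀ x, Φ (Measure.dirac x) = Measure.dirac x) {g : X → ℝ}
    (hg : g ∈ Submodule.span ℝ (Set.range fun z y => k y z)) {L : ℝ} (hle : ∀ y, g y ≤ L) {x : X}
    (heq : ∀ y, g y = L ↔ y = x ∨ y = a x) (m : I) : Φ Ber(x, a x, m) = Ber(x, a x, m) := by
  have := hΦ.isProbabilityMeasure Ber(x, a x, m) inferInstance
  obtain ⟨hint, hint', hΦg⟩ := hΦ.integrable_and_integral_eq_of_mem_span hk.isCost hdirac
    Ber(x, a x, m) hg
  have hL : ∫ y, g y ∂Ber(x, a x, m) = L := (integral_eq_iff_ae_eq_of_le hint hle).2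
    (ae_bernoulliMeasure ((heq x).2 (.inl rfl)) ((heq (a x)).2 (.inr rfl)))
  refine eq_bernoulliMeasure (f := fun y => k y (a x)) ?_ ?_
    (hΦ.integral_eq hk.isCost _ (hdirac _))
  · exact ((integral_eq_iff_ae_eq_of_le hint' hle).1 (hΦg.trans hL)).mono fun y hy => (heq y).1 hy
  · simp only [hk.self, hk.apply_antipode]
    exact hk.pos.ne'

theorem exists_eq_map [PerfectSpace X] (hk : IsAntipodalCost k a M) {ε : ℝ} (hε : 0 < ε)
    (hber : ∀ Φ, IsTransportIsometry k Φ → (∀ x, Φ (Measure.dirac x) = Measure.dirac x) →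
      ∀ x (m : I), m ≤ ε → Φ Ber(x, a x, m) = Ber(x, a x, m)) (hΦ : IsTransportIsometry k Φ) :
    ∃ ψ : X → X, Bijective ψ ∧ (∀ x y, k (ψ x) (ψ y) = k x y) ∧
      ∀ μ, IsProbabilityMeasure μ → Φ μ = μ.map ψ := by
  obtain ⟨ψ, hsurj, hψ⟩ := hk.exists_isTransportIsometry_dirac_eq hΦ
  have hkψ (x y : X) : k (ψ x) (ψ y) = k x y := by
    rw [← hk.isCost.transportCost_dirac_dirac, ← hψ, ← hψ,
      hΦ.transportCost_eq _ _ inferInstance inferInstance, hk.isCost.transportCost_dirac_dirac]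
  have hinj : Injective ψ := fun x y hxy =>
    (hk.eq_zero_iff x y).1 (by rw [← hkψ, hxy, hk.self])
  have hcont : Continuous (Equiv.ofBijective ψ ⟨hinj, hsurj⟩) := hk.continuous_of_forall_eq hkψ
  let e : X ≃ᵐ X := hcont.homeoOfEquivCompactToT2.toMeasurableEquiv
  have hksymm (x y : X) : k (e.symm x) (e.symm y) = k x y := by
    conv_rhs => rw [← e.apply_symm_apply x, ← e.apply_symm_apply y]
    exact (hkψ _ _).symm
  have hΨ := hΦ.map_measurableEquiv hk.isCost e.symm hksymm
  have hΨdirac (x : X) : (Φ (Measure.dirac x)).map e.symm = Measure.dirac x := by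
    rw [hψ, Measure.map_dirac' e.symm.measurable]
    exact congrArg Measure.dirac (e.symm_apply_apply x)
  refine ⟨ψ, ⟨hinj, hsurj⟩, hkψ, fun μ hμ => ?_⟩
  have hid := hk.eq_self_of_bernoulliMeasure_eq hΨ hΨdirac hε (hber _ hΨ hΨdirac) μ
  exact e.map_map_symm.symm.trans (congrArg (Measure.map e) hid)

end Isometry

end IsAntipodalCost

end Antipodal

section Circle

variable {p : ℝ}

lemma exists_abs_le_half_period_coe_eq (hp : 0 < p) (t : AddCircle p) :
    ∃ x : ℝ, |x| ≤ p / 2 ∧ (x : AddCircle p) = t := by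
  have := Fact.mk hp
  obtain ⟨x, ⟨hx₀, hxp⟩, rfl⟩ := AddCircle.eq_coe_Ico t
  rcases le_total x (p / 2) with hx | hx
  · exact ⟨x, (abs_of_nonneg hx₀).trans_le hx, rfl⟩
  · refine ⟨x - p, abs_le.2 ⟨by linarith, by linarith⟩, ?_⟩
    rw [AddCircle.coe_sub, AddCircle.coe_period, sub_zero]

lemma norm_add_half_period (hp : 0 < p) (t : AddCircle p) :
    ‖t + ((p / 2 : ℝ) : AddCircle p)‖ = p / 2 - ‖t‖ := by
  have hcoe {x : ℝ} (hx : |x| ≤ p / 2) : ‖(x : AddCircle p)‖ = |x| :=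
    (AddCircle.norm_coe_eq_abs_iff p hp.ne').2 (by rwa [abs_of_pos hp])
  obtain ⟨x, hx, rfl⟩ := exists_abs_le_half_period_coe_eq hp t
  obtain ⟨hx₁, hx₂⟩ := abs_le.1 hx
  rw [hcoe hx, ← AddCircle.coe_add]
  rcases le_total x 0 with h | h
  · rw [hcoe (abs_le.2 ⟨by linarith, by linarith⟩), abs_of_nonneg (by linarith), abs_of_nonpos h]
    ring
  · have hperiod : ((x + p / 2 : ℝ) : AddCircle p) = ((x + p / 2 - p : ℝ) : AddCircle p) := by
      rw [AddCircle.coe_sub, AddCircle.coe_period, sub_zero]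
    rw [hperiod, hcoe (abs_le.2 ⟨by linarith, by linarith⟩), abs_of_nonpos (by linarith),
      abs_of_nonneg h]
    ring

lemma norm_sub_add_half_period (hp : 0 < p) (s t : AddCircle p) :
    ‖s - (t + ((p / 2 : ℝ) : AddCircle p))‖ = p / 2 - ‖s - t‖ := by
  rw [norm_sub_rev, add_sub_right_comm, norm_add_half_period hp, norm_sub_rev]

end Circle

section Rpow

variable {q s t : ℝ}

lemma rpow_add_rpow_lt_add_rpow (hq : 1 < q) (hs : 0 < s) (ht : 0 < t) :
    s ^ q + t ^ q < (s + t) ^ q := by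
  have hmul {u : ℝ} (hu : 0 < u) : u ^ q = u * u ^ (q - 1) := by
    rw [← Real.rpow_one_add' hu.le (by linarith), add_sub_cancel]
  rw [hmul hs, hmul ht, hmul (add_pos hs ht), add_mul]
  gcongr <;> linarith

/-- Minus the mixed second difference of `(u, v) ↦ (u + v) ^ q` over the rectangle
`[a, b] × [s, t]`; it is additive over subdivisions of the rectangle. -/
noncomputable def mixedDiff (q a b s t : ℝ) : ℝ :=
  (a + t) ^ q + (b + s) ^ q - (a + s) ^ q - (b + t) ^ q

variable {a b B T : ℝ}

lemma mixedDiff_comm (q a b s t : ℝ) : mixedDiff q a b s t = mixedDiff q s t a b := by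
  simp only [mixedDiff, add_comm s, add_comm t]
  ring

lemma mixedDiff_pos (hq₀ : 0 < q) (hq : q < 1) (ha : 0 ≤ a) (hab : a < b) (hs : 0 ≤ s)
    (hst : s < t) : 0 < mixedDiff q a b s t := by
  have hconc := Real.strictConcaveOn_rpow hq₀ hq
  set w := (t - s) / (b - a + (t - s))
  have hden : 0 < b - a + (t - s) := by linarith
  have hw₀ : 0 < w := div_pos (by linarith) hden
  have hw₁ : 0 < 1 - w := by
    rw [sub_pos, div_lt_one hden]
    linarith
  have hw : w * (b - a + (t - s)) = t - s := div_mul_cancel₀ _ hden.ne'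
  have hmem₁ : a + s ∈ Set.Ici (0 : ℝ) := add_nonneg ha hs
  have hmem₂ : b + t ∈ Set.Ici (0 : ℝ) := add_nonneg (ha.trans hab.le) (hs.trans hst.le)
  have hne : a + s ≠ b + t := (add_lt_add hab hst).ne
  have h₁ := hconc.2 hmem₁ hmem₂ hne hw₁ hw₀ (by ring)
  have h₂ := hconc.2 hmem₁ hmem₂ hne hw₀ hw₁ (by ring)
  simp only [smul_eq_mul] at h₁ h₂
  rw [show (1 - w) * (a + s) + w * (b + t) = a + t by linear_combination hw] at h₁
  rw [show w * (a + s) + (1 - w) * (b + t) = b + s by linear_combination -hw] at h₂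
  rw [mixedDiff]
  linarith

lemma mixedDiff_nonneg (hq₀ : 0 < q) (hq : q < 1) (ha : 0 ≤ a) (hab : a ≤ b) (hs : 0 ≤ s)
    (hst : s ≤ t) : 0 ≤ mixedDiff q a b s t := by
  rcases hab.eq_or_lt with rfl | hab
  · simp [mixedDiff]
  rcases hst.eq_or_lt with rfl | hst
  · simp [mixedDiff]
  exact (mixedDiff_pos hq₀ hq ha hab hs hst).le

lemma mixedDiff_add_mixedDiff_le (hq₀ : 0 < q) (hq : q < 1) (ha : 0 ≤ a) (hab : a ≤ b)
    (hbB : b ≤ B) (hs : 0 ≤ s) (hst : s ≤ t) (htT : t ≤ T) :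
    mixedDiff q a b s t + mixedDiff q 0 a 0 T ≤ mixedDiff q 0 B 0 T := by
  have h₁ := mixedDiff_nonneg hq₀ hq (ha.trans hab) hbB le_rfl ((hs.trans hst).trans htT)
  have h₂ := mixedDiff_nonneg hq₀ hq ha hab le_rfl hs
  have h₃ := mixedDiff_nonneg hq₀ hq ha hab (hs.trans hst) htT
  simp only [mixedDiff] at h₁ h₂ h₃ ⊢
  linarith

lemma mixedDiff_le_and_eq_zero_of_eq (hq₀ : 0 < q) (hq : q < 1) (ha : 0 ≤ a) (hab : a ≤ b)
    (hbB : b ≤ B) (hs : 0 ≤ s) (hst : s ≤ t) (htT : t ≤ T) (hB : 0 < B) (hT : 0 < T) :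
    mixedDiff q a b s t ≤ mixedDiff q 0 B 0 T ∧
      (mixedDiff q a b s t = mixedDiff q 0 B 0 T → a = 0 ∧ s = 0) := by
  have hleft := mixedDiff_add_mixedDiff_le hq₀ hq ha hab hbB hs hst htT
  have hright := mixedDiff_add_mixedDiff_le hq₀ hq hs hst htT ha hab hbB
  rw [mixedDiff_comm q s, mixedDiff_comm q 0 T] at hright
  refine ⟨by linarith [mixedDiff_nonneg hq₀ hq le_rfl ha le_rfl hT.le], fun heq => ⟨?_, ?_⟩⟩
  · refine le_antisymm (not_lt.1 fun h => ?_) ha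
    linarith [mixedDiff_pos hq₀ hq le_rfl h le_rfl hT]
  · refine le_antisymm (not_lt.1 fun h => ?_) hs
    linarith [mixedDiff_pos hq₀ hq le_rfl h le_rfl hB]

lemma mixedDiff_le_and_eq_zero_or_of_eq (hq₀ : 0 < q) (hq : q < 1) (hB : 0 < B)
    (hT : 0 < T) (ha : a ∈ Set.Icc 0 B) (hb : b ∈ Set.Icc 0 B) (hs : s ∈ Set.Icc 0 T)
    (ht : t ∈ Set.Icc 0 T) :
    mixedDiff q a b s t ≤ mixedDiff q 0 B 0 T ∧
      (mixedDiff q a b s t = mixedDiff q 0 B 0 T → a = 0 ∧ s = 0 ∨ b = 0 ∧ t = 0) := by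
  have hpos := mixedDiff_pos hq₀ hq le_rfl hB le_rfl hT
  have hneg₁ : mixedDiff q a b s t = -mixedDiff q b a s t := by rw [mixedDiff, mixedDiff]; ring
  have hneg₂ : mixedDiff q a b s t = -mixedDiff q a b t s := by rw [mixedDiff, mixedDiff]; ring
  have hswap : mixedDiff q a b s t = mixedDiff q b a t s := by rw [mixedDiff, mixedDiff]; ring
  rcases le_total a b with hab | hab <;> rcases le_total s t with hst | hst
  · exact (mixedDiff_le_and_eq_zero_of_eq hq₀ hq ha.1 hab hb.2 hs.1 hst ht.2 hB hT).imp_right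
      fun h heq => .inl (h heq)
  · have := mixedDiff_nonneg hq₀ hq ha.1 hab ht.1 hst
    exact ⟨by linarith, fun h => by linarith⟩
  · have := mixedDiff_nonneg hq₀ hq hb.1 hab hs.1 hst
    exact ⟨by linarith, fun h => by linarith⟩
  · rw [hswap]
    exact (mixedDiff_le_and_eq_zero_of_eq hq₀ hq hb.1 hab ha.2 ht.1 hst hs.2 hB hT).imp_right
      fun h heq => .inr (h heq)

end Rpow

section Torus

variable {n : ℕ} {p : ℝ}

/-- The square of the flat metric `torusDist`. -/
noncomputable def sqDist (x y : Torus n) : ℝ :=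
  ∑ k, ‖x k - y k‖ ^ 2

/-- The point of the torus opposite to `x`, farthest from it. -/
noncomputable def antipode (x : Torus n) : Torus n :=
  fun k => x k + ((1 / 2 : ℝ) : AddCircle (1 : ℝ))

lemma torusDist_rpow (x y : Torus n) (p : ℝ) : torusDist x y ^ p = sqDist x y ^ (p / 2) := by
  simp only [torusDist, sqDist, dist_eq_norm]
  exact (Real.rpow_div_two_eq_sqrt _ (Finset.sum_nonneg fun k _ => sq_nonneg _)).symm

lemma sqDist_comm (x y : Torus n) : sqDist x y = sqDist y x := by
  simp only [sqDist, norm_sub_rev]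

lemma sqDist_nonneg (x y : Torus n) : 0 ≤ sqDist x y :=
  Finset.sum_nonneg fun _ _ => sq_nonneg _

lemma sqDist_eq_zero_iff {x y : Torus n} : sqDist x y = 0 ↔ x = y := by
  rw [sqDist, Finset.sum_eq_zero_iff_of_nonneg fun _ _ => sq_nonneg _, funext_iff]
  simp only [Finset.mem_univ, forall_const, sq_eq_zero_iff, norm_eq_zero, sub_eq_zero]

lemma norm_le_half (t : AddCircle (1 : ℝ)) : ‖t‖ ≤ 1 / 2 := by
  simpa only [abs_one] using AddCircle.norm_le_half_period (1 : ℝ) one_ne_zero (x := t)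

lemma norm_sub_antipode (x y : Torus n) (k : Fin n) :
    ‖y k - antipode x k‖ = 1 / 2 - ‖y k - x k‖ :=
  norm_sub_add_half_period one_pos _ _

lemma sqDist_add_sqDist_antipode (x y : Torus n) :
    sqDist y x + sqDist y (antipode x) =
      n / 4 - 2 * ∑ k, ‖y k - x k‖ * (1 / 2 - ‖y k - x k‖) := by
  have hn : (n / 4 : ℝ) = ∑ _k : Fin n, 1 / 4 := by
    rw [Fin.sum_const, nsmul_eq_mul, mul_one_div]
  simp only [sqDist, norm_sub_antipode, hn]
  rw [Finset.mul_sum, ← Finset.sum_add_distrib, ← Finset.sum_sub_distrib]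
  exact Finset.sum_congr rfl fun k _ => by ring

lemma norm_mul_half_sub_nonneg (t : AddCircle (1 : ℝ)) : 0 ≤ ‖t‖ * (1 / 2 - ‖t‖) :=
  mul_nonneg (norm_nonneg t) (sub_nonneg.2 (norm_le_half t))

lemma sqDist_add_sqDist_antipode_le (x y : Torus n) :
    sqDist y x + sqDist y (antipode x) ≤ n / 4 := by
  have := Finset.sum_nonneg fun k (_ : k ∈ Finset.univ) => norm_mul_half_sub_nonneg (y k - x k)
  linarith [sqDist_add_sqDist_antipode x y]

lemma sqDist_antipode_self (x : Torus n) : sqDist x (antipode x) = n / 4 := by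
  have h := sqDist_add_sqDist_antipode x x
  simpa only [sqDist_eq_zero_iff.2 rfl, sub_self, norm_zero, zero_mul, Finset.sum_const_zero,
    mul_zero, sub_zero, zero_add] using h

lemma sqDist_le (x y : Torus n) : sqDist x y ≤ n / 4 := by
  linarith [sqDist_add_sqDist_antipode_le y x, sqDist_nonneg x (antipode y)]

lemma sqDist_eq_iff {x y : Torus n} : sqDist x y = n / 4 ↔ y = antipode x := by
  refine ⟨fun h => sqDist_eq_zero_iff.1 (le_antisymm ?_ (sqDist_nonneg _ _)), ?_⟩
  · linarith [sqDist_add_sqDist_antipode_le x y, sqDist_comm x y]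
  · rintro rfl
    exact sqDist_antipode_self x

lemma norm_sq_le_quarter (t : AddCircle (1 : ℝ)) : ‖t‖ ^ 2 ≤ 1 / 4 := by
  nlinarith [norm_nonneg t, norm_le_half t]

lemma sum_erase_sq_le (x y : Torus n) (i : Fin n) :
    ∑ k ∈ Finset.univ.erase i, ‖y k - x k‖ ^ 2 ≤ ((n : ℝ) - 1) / 4 := by
  refine (Finset.sum_le_card_nsmul _ _ (1 / 4) fun k _ => norm_sq_le_quarter _).trans_eq ?_
  rw [Finset.card_erase_of_mem (Finset.mem_univ i), Finset.card_univ, Fintype.card_fin,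
    nsmul_eq_mul, Nat.cast_pred i.pos, mul_one_div]

lemma sqDist_update (x y : Torus n) (i : Fin n) (t : AddCircle (1 : ℝ)) :
    sqDist y (update x i t) = ∑ k ∈ Finset.univ.erase i, ‖y k - x k‖ ^ 2 + ‖y i - t‖ ^ 2 := by
  rw [sqDist, ← Finset.sum_erase_add _ _ (Finset.mem_univ i), update_self]
  congr 1
  exact Finset.sum_congr rfl fun k hk => by rw [update_of_ne (Finset.ne_of_mem_erase hk)]

/-- The mixed difference of the cost of `y` over the four points obtained from `x` by moving the
`i`-th coordinate, the other coordinates, both or neither to the antipode. -/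
noncomputable def crossDiff (p : ℝ) (i : Fin n) (x y : Torus n) : ℝ :=
  torusDist y (update x i (antipode x i)) ^ p + torusDist y (update (antipode x) i (x i)) ^ p -
    torusDist y x ^ p - torusDist y (antipode x) ^ p

lemma crossDiff_eq_mixedDiff (p : ℝ) (i : Fin n) (x y : Torus n) :
    crossDiff p i x y = mixedDiff (p / 2) (∑ k ∈ Finset.univ.erase i, ‖y k - x k‖ ^ 2)
      (∑ k ∈ Finset.univ.erase i, ‖y k - antipode x k‖ ^ 2) (‖y i - x i‖ ^ 2)
      (‖y i - antipode x i‖ ^ 2) := by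
  have h (z : Torus n) := sqDist_update z y i (z i)
  simp only [update_eq_self] at h
  rw [crossDiff, mixedDiff]
  simp only [torusDist_rpow, sqDist_update, h x, h (antipode x)]

lemma crossDiff_of_eq (p : ℝ) (i : Fin n) {x y : Torus n} (hy : y = x ∨ y = antipode x) :
    crossDiff p i x y = mixedDiff (p / 2) 0 ((n - 1) / 4) 0 (1 / 4) := by
  have hsum : ∑ _k ∈ Finset.univ.erase i, (1 / 4 : ℝ) = (n - 1) / 4 := by
    rw [Finset.sum_const, Finset.card_erase_of_mem (Finset.mem_univ i), Finset.card_univ,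
      Fintype.card_fin, nsmul_eq_mul, Nat.cast_pred i.pos, mul_one_div]
  have hsq : (1 / 2 : ℝ) ^ 2 = 1 / 4 := by norm_num
  have hdist (k : Fin n) : ‖x k - antipode x k‖ = 1 / 2 ∧ ‖antipode x k - x k‖ = 1 / 2 := by
    have h := norm_sub_antipode x x k
    rw [sub_self, norm_zero, sub_zero] at h
    exact ⟨h, (norm_sub_rev _ _).trans h⟩
  rw [crossDiff_eq_mixedDiff]
  rcases hy with rfl | rfl
  · simp only [sub_self, norm_zero, (hdist _).1, hsq, hsum, zero_pow two_ne_zero,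
      Finset.sum_const_zero]
  · simp only [sub_self, norm_zero, (hdist _).2, hsum, hsq, zero_pow two_ne_zero,
      Finset.sum_const_zero, mixedDiff]
    ring

lemma crossDiff_le_and_eq_iff (hp₀ : 0 < p) (hp : p < 2) (hn : 2 ≤ n) (i : Fin n)
    (x y : Torus n) :
    crossDiff p i x y ≤ mixedDiff (p / 2) 0 ((n - 1) / 4) 0 (1 / 4) ∧
      (crossDiff p i x y = mixedDiff (p / 2) 0 ((n - 1) / 4) 0 (1 / 4) ↔
        y = x ∨ y = antipode x) := by
  have hn' : (2 : ℝ) ≤ n := by exact_mod_cast hn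
  have hsum (z : Torus n) : ∑ k ∈ Finset.univ.erase i, ‖y k - z k‖ ^ 2 ∈
      Set.Icc (0 : ℝ) ((n - 1) / 4) :=
    ⟨Finset.sum_nonneg fun _ _ => sq_nonneg _, sum_erase_sq_le z y i⟩
  have hcoord (z : Torus n) : ‖y i - z i‖ ^ 2 ∈ Set.Icc (0 : ℝ) (1 / 4) :=
    ⟨sq_nonneg _, norm_sq_le_quarter _⟩
  have heq (z : Torus n) (h : ∑ k ∈ Finset.univ.erase i, ‖y k - z k‖ ^ 2 = 0 ∧
      ‖y i - z i‖ ^ 2 = 0) : y = z := by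
    rw [← sqDist_eq_zero_iff, ← update_eq_self i z, sqDist_update, h.1, h.2, add_zero]
  have h := mixedDiff_le_and_eq_zero_or_of_eq (q := p / 2) (by linarith) (by linarith)
    (by linarith : 0 < ((n : ℝ) - 1) / 4) (by norm_num : (0 : ℝ) < 1 / 4) (hsum x)
    (hsum (antipode x)) (hcoord x) (hcoord (antipode x))
  rw [← crossDiff_eq_mixedDiff] at h
  exact ⟨h.1, fun hy => (h.2 hy).imp (heq x) (heq (antipode x)), crossDiff_of_eq p i⟩

lemma isAntipodalCost_torusDist [NeZero n] (hp : 0 < p) :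
    IsAntipodalCost (fun x y : Torus n => torusDist x y ^ p) antipode ((n / 4) ^ (p / 2)) := by
  have hn : (0 : ℝ) < n / 4 := div_pos (Nat.cast_pos.2 (NeZero.pos n)) four_pos
  have hp2 : 0 < p / 2 := half_pos hp
  simp only [torusDist_rpow]
  exact {
    continuous := by
      refine Continuous.rpow_const ?_ fun _ => .inr hp2.le
      unfold sqDist
      fun_prop
    symm := fun x y => by rw [sqDist_comm]
    nonneg := fun x y => Real.rpow_nonneg (sqDist_nonneg x y) _
    eq_zero_iff := fun x y => by
      rw [Real.rpow_eq_zero (sqDist_nonneg x y) hp2.ne', sqDist_eq_zero_iff]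
    le := fun x y => Real.rpow_le_rpow (sqDist_nonneg x y) (sqDist_le x y) hp2.le
    eq_iff := fun x y => by
      rw [Real.rpow_left_inj (sqDist_nonneg x y) hn.le hp2.ne', sqDist_eq_iff]
    pos := Real.rpow_pos_of_pos hn _ }

lemma perfectSpace_torus [NeZero n] : PerfectSpace (Torus n) := by
  have : Nontrivial (Torus n) :=
    ⟨0, antipode 0, (isAntipodalCost_torusDist one_pos).ne_antipode 0⟩
  infer_instance

end Torus

section TorusIsometry

variable {n : ℕ} [NeZero n] {p : ℝ} {Φ : Measure (Torus n) → Measure (Torus n)}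

lemma bernoulliMeasure_eq_of_two_lt (hp : 2 < p)
    (hΦ : IsTransportIsometry (fun x y : Torus n => torusDist x y ^ p) Φ)
    (hdirac : ∀ x, Φ (Measure.dirac x) = Measure.dirac x) (x : Torus n) (m : I) :
    Φ Ber(x, antipode x, m) = Ber(x, antipode x, m) := by
  have hk := isAntipodalCost_torusDist (n := n) (p := p) (by linarith)
  have hmem (z : Torus n) : (fun y => torusDist y z ^ p) ∈
      Submodule.span ℝ (Set.range fun z y : Torus n => torusDist y z ^ p) :=
    Submodule.subset_span ⟨z, rfl⟩
  have hle (y : Torus n) :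
      (sqDist y x + sqDist y (antipode x)) ^ (p / 2) ≤ ((n : ℝ) / 4) ^ (p / 2) :=
    Real.rpow_le_rpow (add_nonneg (sqDist_nonneg _ _) (sqDist_nonneg _ _))
      (sqDist_add_sqDist_antipode_le x y) (by linarith)
  have hends (y : Torus n) (hy : y = x ∨ y = antipode x) :
      torusDist y x ^ p + torusDist y (antipode x) ^ p = ((n : ℝ) / 4) ^ (p / 2) := by
    rcases hy with rfl | rfl
    · rw [hk.self, hk.apply_antipode, zero_add]
    · rw [hk.self, hk.symm, hk.apply_antipode, add_zero]
  have hlt (y : Torus n) (hy : ¬(y = x ∨ y = antipode x)) :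
      torusDist y x ^ p + torusDist y (antipode x) ^ p < ((n : ℝ) / 4) ^ (p / 2) := by
    obtain ⟨hyx, hya⟩ := not_or.1 hy
    simp only [torusDist_rpow]
    exact (rpow_add_rpow_lt_add_rpow (by linarith)
      ((sqDist_nonneg y x).lt_of_ne' (sqDist_eq_zero_iff.not.2 hyx))
      ((sqDist_nonneg y _).lt_of_ne' (sqDist_eq_zero_iff.not.2 hya))).trans_le (hle y)
  refine hk.bernoulliMeasure_eq_of_mem_span hΦ hdirac
    (Submodule.add_mem _ (hmem x) (hmem (antipode x))) (L := (n / 4) ^ (p / 2)) (fun y => ?_)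
    (fun y => ⟨fun h => ?_, hends y⟩) m
  · exact (em _).elim (fun hy => (hends y hy).le) fun hy => (hlt y hy).le
  · exact by_contra fun hy => (hlt y hy).ne h

lemma bernoulliMeasure_eq_of_lt_two (hp₀ : 0 < p) (hp : p < 2) (hn : 2 ≤ n)
    (hΦ : IsTransportIsometry (fun x y : Torus n => torusDist x y ^ p) Φ)
    (hdirac : ∀ x, Φ (Measure.dirac x) = Measure.dirac x) (x : Torus n) (m : I) :
    Φ Ber(x, antipode x, m) = Ber(x, antipode x, m) := by
  have hmem (z : Torus n) : (fun y => torusDist y z ^ p) ∈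
      Submodule.span ℝ (Set.range fun z y : Torus n => torusDist y z ^ p) :=
    Submodule.subset_span ⟨z, rfl⟩
  have h := crossDiff_le_and_eq_iff hp₀ hp hn 0 x
  exact (isAntipodalCost_torusDist hp₀).bernoulliMeasure_eq_of_mem_span hΦ hdirac
    (g := crossDiff p 0 x)
    (Submodule.sub_mem _ (Submodule.sub_mem _ (Submodule.add_mem _ (hmem _) (hmem _)) (hmem _))
      (hmem _)) (fun y => (h y).1) (fun y => (h y).2) m

end TorusIsometry

section Vertex

variable {ι : Type*} {s : ι → Bool} {k : ι}

/-- The `k`-th coordinate of a vertex of the cube, as a real number. -/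
def bit (k : ι) (s : ι → Bool) : ℝ :=
  if s k then 1 else 0

lemma bit_bot (k : ι) : bit k ⊥ = 0 := by
  simp [bit]

lemma bit_top (k : ι) : bit k ⊤ = 1 := by
  simp [bit]

lemma bit_eq_bit_iff {l : ι} : bit k s = bit l s ↔ s k = s l := by
  rcases hk : s k <;> rcases hl : s l <;> simp [bit, hk, hl]

lemma bit_nonneg (k : ι) (s : ι → Bool) : 0 ≤ bit k s := by
  unfold bit
  split_ifs <;> norm_num

variable [DecidableEq ι]

/-- The vertex of the cube adjacent to `⊥` in direction `k`. -/
def atom (k : ι) : ι → Bool :=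
  update ⊥ k true

lemma bit_atom (k l : ι) : bit l (atom k) = if l = k then 1 else 0 := by
  by_cases h : l = k <;> simp [bit, atom, h]

lemma atom_le (h : s k = true) : atom k ≤ s := by
  intro l
  rcases eq_or_ne l k with rfl | hl
  · simp [h]
  · simp [atom, hl]

lemma inf_atom (s : ι → Bool) (k : ι) : s ⊓ atom k = if s k then atom k else ⊥ := by
  split_ifs with h
  · exact inf_eq_right.2 (atom_le h)
  · ext l
    rcases eq_or_ne l k with rfl | hl
    · simp [h]
    · simp [atom, hl]

lemma bit_inf_atom (k l : ι) (s : ι → Bool) :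
    bit l (s ⊓ atom k) = if l = k then bit l s else 0 := by
  rw [inf_atom]
  split_ifs with hs hl hl
  · rw [bit_atom, if_pos hl, bit, hl, if_pos hs]
  · rw [bit_atom, if_neg hl]
  · rw [bit_bot, bit, hl, if_neg hs]
  · rw [bit_bot]

/-- Maps a vertex of the cube to a vertex below it on the axes through `⊥` in directions `i` and
`j`; on the vertices `⊥`, `atom i` and `atom j` of these axes it is the identity. -/
def axisRetraction (i j : ι) (s : ι → Bool) : ι → Bool :=
  if s i then atom i else if s j then atom j else ⊥

lemma axisRetraction_le (i j : ι) (s : ι → Bool) : axisRetraction i j s ≤ s := by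
  unfold axisRetraction
  split_ifs with hi hj
  exacts [atom_le hi, atom_le hj, bot_le]

lemma axisRetraction_bot (i j : ι) : axisRetraction i j ⊥ = ⊥ := by
  simp [axisRetraction]

lemma axisRetraction_atom_left (i j : ι) : axisRetraction i j (atom i) = atom i := by
  simp [axisRetraction, atom]

lemma axisRetraction_atom_right (i j : ι) : axisRetraction i j (atom j) = atom j := by
  rcases eq_or_ne i j with rfl | hij
  · exact axisRetraction_atom_left i i
  · simp [axisRetraction, atom, hij]

lemma axisRetraction_mem (i j : ι) (s : ι → Bool) :
    axisRetraction i j s ∈ ({atom i, atom j, ⊥} : Set (ι → Bool)) := by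
  unfold axisRetraction
  split_ifs <;> simp

lemma axisRetraction_idem (i j : ι) (s : ι → Bool) :
    axisRetraction i j (axisRetraction i j s) = axisRetraction i j s := by
  rcases axisRetraction_mem i j s with h | h | h <;> rw [h]
  exacts [axisRetraction_atom_left i j, axisRetraction_atom_right i j, axisRetraction_bot i j]

lemma axisRetraction_inf_atom_left (i j : ι) (s : ι → Bool) :
    axisRetraction i j (s ⊓ atom i) = s ⊓ atom i := by
  rw [inf_atom]
  split_ifs
  exacts [axisRetraction_atom_left i j, axisRetraction_bot i j]

lemma axisRetraction_inf_atom_right (i j : ι) (s : ι → Bool) :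
    axisRetraction i j (s ⊓ atom j) = s ⊓ atom j := by
  rw [inf_atom]
  split_ifs
  exacts [axisRetraction_atom_right i j, axisRetraction_bot i j]

end Vertex

section HammingCost

variable {ι : Type*} [Fintype ι] {s t : ι → Bool} {i j : ι}

/-- The Hamming distance on the cube `ι → Bool`, as a real-valued cost. -/
def hammingCost (s t : ι → Bool) : ℝ :=
  hammingDist s t

lemma hammingCost_eq_sum (s t : ι → Bool) :
    hammingCost s t = ∑ k, if s k = t k then 0 else 1 := by
  simp only [hammingCost, hammingDist, Finset.card_eq_sum_ones, Finset.sum_filter, Nat.cast_sum,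
    Nat.cast_ite, Nat.cast_one, Nat.cast_zero, ne_eq, ite_not]

lemma hammingCost_comm (s t : ι → Bool) : hammingCost s t = hammingCost t s := by
  rw [hammingCost, hammingDist_comm, hammingCost]

lemma hammingCost_self (s : ι → Bool) : hammingCost s s = 0 := by
  rw [hammingCost, hammingDist_self, Nat.cast_zero]

lemma hammingCost_nonneg (s t : ι → Bool) : 0 ≤ hammingCost s t :=
  Nat.cast_nonneg _

lemma isCost_hammingCost : IsCost (hammingCost (ι := ι)) where
  measurable := measurable_of_finite _
  nonneg := hammingCost_nonneg
  bounded := ⟨Fintype.card ι, fun _ _ => Nat.cast_le.2 hammingDist_le_card_fintype⟩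

lemma hammingCost_of_le (h : t ≤ s) :
    hammingCost s t = hammingCost s ⊥ - hammingCost t ⊥ := by
  simp only [hammingCost_eq_sum, ← Finset.sum_sub_distrib]
  refine Finset.sum_congr rfl fun k _ => ?_
  have hk := h k
  rcases hs : s k <;> rcases ht : t k
  · simp
  · exact absurd hk (by simp [hs, ht])
  · simp
  · simp

variable [DecidableEq ι]

lemma hammingCost_atom (k : ι) (s : ι → Bool) :
    hammingCost s (atom k) = hammingCost s ⊥ + 1 - 2 * bit k s := by
  have hsum : ∑ l, (if l = k then 1 - 2 * bit k s else 0) = 1 - 2 * bit k s :=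
    Fintype.sum_ite_eq' k _
  rw [add_sub_assoc, ← hsum, hammingCost_eq_sum, hammingCost_eq_sum, ← Finset.sum_add_distrib]
  refine Finset.sum_congr rfl fun l _ => ?_
  rcases eq_or_ne l k with rfl | hl
  · rcases hs : s l
    · simp [atom, bit, hs]
    · norm_num [atom, bit, hs]
  · simp [atom, hl]

lemma hammingCost_atom_bot (k : ι) : hammingCost (atom k) ⊥ = 1 := by
  have h := hammingCost_atom k (atom k)
  rw [hammingCost_self, bit_atom, if_pos rfl] at h
  linarith

lemma hammingCost_axisRetraction_bot (i j : ι) (s : ι → Bool) :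
    hammingCost (axisRetraction i j s) ⊥ = max (bit i s) (bit j s) := by
  unfold axisRetraction bit
  split_ifs <;> simp [hammingCost_atom_bot, hammingCost_self]

lemma hammingCost_axisRetraction (i j : ι) (s : ι → Bool) :
    hammingCost s (axisRetraction i j s) = hammingCost s ⊥ - max (bit i s) (bit j s) := by
  rw [hammingCost_of_le (axisRetraction_le i j s), hammingCost_axisRetraction_bot]

lemma le_hammingCost_of_axisRetraction_eq (ht : axisRetraction i j t = t) :
    hammingCost s ⊥ - 2 * max (bit i s) (bit j s) + hammingCost t ⊥ ≤ hammingCost s t := by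
  have hi := le_max_left (bit i s) (bit j s)
  have hj := le_max_right (bit i s) (bit j s)
  rcases ht ▸ axisRetraction_mem i j t with rfl | rfl | rfl
  · rw [hammingCost_atom, hammingCost_atom_bot]
    linarith
  · rw [hammingCost_atom, hammingCost_atom_bot]
    linarith
  · linarith [hammingCost_self (⊥ : ι → Bool), bit_nonneg i s]

end HammingCost

section CubeMeasure

variable {ι : Type*} [DecidableEq ι] {i j : ι}

/-- The probability measure carried by `atom i`, `atom j` and `⊥` that gives mass `a` to `atom i`
and mass `c` to `atom j`. The weights are truncated at `0`, so this requires `0 ≤ a`, `0 ≤ c` and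
`a + c ≤ 1`. -/
noncomputable def axisMeasure (i j : ι) (a c : ℝ) : Measure (ι → Bool) :=
  ENNReal.ofReal a • .dirac (atom i) + ENNReal.ofReal c • .dirac (atom j) +
    ENNReal.ofReal (1 - a - c) • .dirac ⊥

section

variable {a c : ℝ}

lemma isProbabilityMeasure_axisMeasure (ha : 0 ≤ a) (hc : 0 ≤ c) (hac : a + c ≤ 1) :
    IsProbabilityMeasure (axisMeasure i j a c) := by
  refine ⟨?_⟩
  simp only [axisMeasure, Measure.coe_add, Measure.coe_smul, Pi.add_apply, Pi.smul_apply,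
    measure_univ, smul_eq_mul, mul_one]
  rw [← ENNReal.ofReal_add ha hc, ← ENNReal.ofReal_add (add_nonneg ha hc) (by linarith),
    ENNReal.ofReal_eq_one]
  ring

variable [Finite ι]

lemma ae_axisMeasure (i j : ι) (a c : ℝ) :
    ∀ᵐ s ∂axisMeasure i j a c, axisRetraction i j s = s := by
  simp only [axisMeasure, ae_add_measure_iff]
  refine ⟨⟨?_, ?_⟩, ?_⟩ <;> refine Measure.ae_smul_measure ((ae_dirac_iff (.of_discrete)).2 ?_) _
  exacts [axisRetraction_atom_left i j, axisRetraction_atom_right i j, axisRetraction_bot i j]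

lemma integral_axisMeasure (ha : 0 ≤ a) (hc : 0 ≤ c) (hac : a + c ≤ 1) (f : (ι → Bool) → ℝ) :
    ∫ s, f s ∂axisMeasure i j a c =
      a * f (atom i) + c * f (atom j) + (1 - a - c) * f ⊥ := by
  have hint (r : ℝ) (s : ι → Bool) : Integrable f (ENNReal.ofReal r • .dirac s) :=
    Integrable.of_finite.smul_measure ENNReal.ofReal_ne_top
  rw [axisMeasure, integral_add_measure ((hint _ _).add_measure (hint _ _)) (hint _ _),
    integral_add_measure (hint _ _) (hint _ _)]
  simp only [integral_smul_measure, integral_dirac, smul_eq_mul, ENNReal.toReal_ofReal ha,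
    ENNReal.toReal_ofReal hc, ENNReal.toReal_ofReal (show 0 ≤ 1 - a - c by linarith)]

lemma integral_bit_left_axisMeasure (hij : i ≠ j) (ha : 0 ≤ a) (hc : 0 ≤ c) (hac : a + c ≤ 1) :
    ∫ s, bit i s ∂axisMeasure i j a c = a := by
  rw [integral_axisMeasure ha hc hac, bit_atom, bit_atom, bit_bot, if_pos rfl, if_neg hij]
  ring

lemma integral_bit_right_axisMeasure (hij : i ≠ j) (ha : 0 ≤ a) (hc : 0 ≤ c) (hac : a + c ≤ 1) :
    ∫ s, bit j s ∂axisMeasure i j a c = c := by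
  rw [integral_axisMeasure ha hc hac, bit_atom, bit_atom, bit_bot, if_pos rfl, if_neg hij.symm]
  ring

end

variable [Finite ι] {μ ν : Measure (ι → Bool)}

lemma integral_eq_of_axisRetraction_eq [IsProbabilityMeasure μ] (hij : i ≠ j)
    (hμ : ∀ᵐ s ∂μ, axisRetraction i j s = s) (f : (ι → Bool) → ℝ) :
    ∫ s, f s ∂μ = f ⊥ + (∫ s, bit i s ∂μ) * (f (atom i) - f ⊥) +
      (∫ s, bit j s ∂μ) * (f (atom j) - f ⊥) := by
  have hf : f =ᵐ[μ] fun s => f ⊥ + bit i s * (f (atom i) - f ⊥) +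
      bit j s * (f (atom j) - f ⊥) := by
    filter_upwards [hμ] with s hs
    rcases hs ▸ axisRetraction_mem i j s with rfl | rfl | rfl
    · rw [bit_atom, bit_atom, if_pos rfl, if_neg hij.symm]
      ring
    · rw [bit_atom, bit_atom, if_neg hij, if_pos rfl]
      ring
    · rw [bit_bot, bit_bot]
      ring
  rw [integral_congr_ae hf, integral_add .of_finite .of_finite,
    integral_add .of_finite .of_finite, integral_const, probReal_univ, one_smul,
    integral_mul_const, integral_mul_const]

lemma eq_of_integral_bit_eq [IsProbabilityMeasure μ] [IsProbabilityMeasure ν] (hij : i ≠ j)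
    (hμ : ∀ᵐ s ∂μ, axisRetraction i j s = s) (hν : ∀ᵐ s ∂ν, axisRetraction i j s = s)
    (hi : ∫ s, bit i s ∂μ = ∫ s, bit i s ∂ν) (hj : ∫ s, bit j s ∂μ = ∫ s, bit j s ∂ν) :
    μ = ν := by
  refine Measure.ext_of_measureReal_singleton fun s => ?_
  rw [← integral_indicator_one (.singleton s), ← integral_indicator_one (.singleton s),
    integral_eq_of_axisRetraction_eq hij hμ, integral_eq_of_axisRetraction_eq hij hν, hi, hj]

end CubeMeasure

section CubeIsometry

variable {ι : Type*} [Fintype ι]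

lemma transportCost_hammingCost_map_le_of_le {Ω : Type*} [MeasurableSpace Ω] (ρ : Measure Ω)
    [IsProbabilityMeasure ρ] {f g : Ω → ι → Bool} (hf : Measurable f) (hg : Measurable g)
    (hfg : ∀ ω, f ω ≤ g ω) :
    transportCost hammingCost (ρ.map f) (ρ.map g) ≤
      ∫ s, hammingCost s ⊥ ∂ρ.map g - ∫ s, hammingCost s ⊥ ∂ρ.map f := by
  have h := isCost_hammingCost (ι := ι)
  calc transportCost hammingCost (ρ.map f) (ρ.map g) ≤ ∫ ω, hammingCost (f ω) (g ω) ∂ρ :=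
        transportCost_map_le h.nonneg h.measurable ρ hf hg
    _ = ∫ ω, (hammingCost (g ω) ⊥ - hammingCost (f ω) ⊥) ∂ρ := by
        simp only [hammingCost_comm (f _), hammingCost_of_le (hfg _)]
    _ = ∫ s, hammingCost s ⊥ ∂ρ.map g - ∫ s, hammingCost s ⊥ ∂ρ.map f := by
        rw [integral_sub (h.integrable ρ hg measurable_const) (h.integrable ρ hf measurable_const),
          integral_map hf.aemeasurable .of_discrete, integral_map hg.aemeasurable .of_discrete]

lemma ae_apply_eq_apply_of_integral_max_le {ι : Type*} [Finite ι] {i j : ι}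
    {μ : Measure (ι → Bool)} [IsProbabilityMeasure μ]
    (hi : ∫ s, max (bit i s) (bit j s) ∂μ ≤ ∫ s, bit i s ∂μ)
    (hj : ∫ s, max (bit i s) (bit j s) ∂μ ≤ ∫ s, bit j s ∂μ) : ∀ᵐ s ∂μ, s i = s j := by
  have hae {k : ι} (hk : ∀ s, bit k s ≤ max (bit i s) (bit j s))
      (hle : ∫ s, max (bit i s) (bit j s) ∂μ ≤ ∫ s, bit k s ∂μ) :
      bit k =ᵐ[μ] fun s => max (bit i s) (bit j s) :=
    (integral_eq_iff_of_ae_le .of_finite .of_finite (.of_forall hk)).1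
      (le_antisymm (integral_mono .of_finite .of_finite hk) hle)
  filter_upwards [hae (fun s => le_max_left _ _) hi, hae (fun s => le_max_right _ _) hj]
    with s hsi hsj
  exact bit_eq_bit_iff.1 (hsi.trans hsj.symm)

section Axes

variable [DecidableEq ι] {i j : ι}

lemma integral_hammingCost_bot_of_axisRetraction_eq {μ : Measure (ι → Bool)}
    [IsProbabilityMeasure μ] (hij : i ≠ j) (hμ : ∀ᵐ s ∂μ, axisRetraction i j s = s) :
    ∫ s, hammingCost s ⊥ ∂μ = ∫ s, bit i s ∂μ + ∫ s, bit j s ∂μ := by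
  rw [integral_eq_of_axisRetraction_eq hij hμ, hammingCost_atom_bot, hammingCost_atom_bot,
    hammingCost_self]
  ring

/-- A coin toss decides which of the coordinates `i` and `j` of a `ν`-distributed vertex to keep. -/
lemma transportCost_hammingCost_le_of_integral_bit_eq_two_mul {κ ν : Measure (ι → Bool)}
    [IsProbabilityMeasure κ] [IsProbabilityMeasure ν] (hij : i ≠ j)
    (hκ : ∀ᵐ s ∂κ, axisRetraction i j s = s)
    (hi : ∫ s, bit i s ∂ν = 2 * ∫ s, bit i s ∂κ) (hj : ∫ s, bit j s ∂ν = 2 * ∫ s, bit j s ∂κ) :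
    transportCost hammingCost κ ν ≤ ∫ s, hammingCost s ⊥ ∂ν - ∫ s, hammingCost s ⊥ ∂κ := by
  let ρ : Measure ((ι → Bool) × Bool) := ν.prod Ber(true, false, ⟨1 / 2, by norm_num, by norm_num⟩)
  let thin (q : (ι → Bool) × Bool) : ι → Bool := q.1 ⊓ atom (bif q.2 then i else j)
  have hthin : Measurable thin := .of_discrete
  have hint (f : (ι → Bool) → ℝ) :
      ∫ s, f s ∂ρ.map thin = (∫ s, f (s ⊓ atom i) ∂ν + ∫ s, f (s ⊓ atom j) ∂ν) / 2 := by
    rw [integral_map hthin.aemeasurable .of_discrete, integral_prod _ .of_finite]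
    simp only [integral_bernoulliMeasure, thin, cond_true, cond_false]
    rw [← integral_add .of_finite .of_finite, ← integral_div]
    congr with s
    simp only [smul_eq_mul]
    ring
  have := Measure.isProbabilityMeasure_map (μ := ρ) hthin.aemeasurable
  have hmap : ρ.map thin = κ := by
    refine eq_of_integral_bit_eq hij ?_ hκ ?_ ?_
    · rw [ae_map_iff hthin.aemeasurable .of_discrete]
      refine .of_forall fun q => ?_
      rcases hq : q.2
      · simp only [thin, hq, cond_false, axisRetraction_inf_atom_right]
      · simp only [thin, hq, cond_true, axisRetraction_inf_atom_left]
    · simp only [hint, bit_inf_atom, if_true, if_neg hij, integral_zero, hi]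
      ring
    · simp only [hint, bit_inf_atom, if_true, if_neg hij.symm, integral_zero, hj]
      ring
  have hfst : ρ.map Prod.fst = ν := Measure.fst_prod
  rw [← hmap, ← hfst]
  exact transportCost_hammingCost_map_le_of_le ρ hthin measurable_fst fun _ => inf_le_left

lemma le_transportCost_hammingCost_of_axisRetraction_eq {μ ν : Measure (ι → Bool)}
    [IsProbabilityMeasure μ] [IsProbabilityMeasure ν] (hν : ∀ᵐ t ∂ν, axisRetraction i j t = t) :
    ∫ s, hammingCost s ⊥ ∂μ - 2 * ∫ s, max (bit i s) (bit j s) ∂μ + ∫ t, hammingCost t ⊥ ∂ν ≤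
      transportCost hammingCost μ ν := by
  rw [← integral_const_mul, ← integral_sub .of_finite .of_finite]
  exact isCost_hammingCost.integral_add_integral_le_transportCost .of_finite .of_finite
    (T := {t | axisRetraction i j t = t}) hν fun s t ht => le_hammingCost_of_axisRetraction_eq ht

lemma ae_axisRetraction_eq_of_integral_le {μ : Measure (ι → Bool)} [IsProbabilityMeasure μ]
    (h : ∫ s, hammingCost s ⊥ ∂μ ≤ ∫ s, max (bit i s) (bit j s) ∂μ) :
    ∀ᵐ s ∂μ, axisRetraction i j s = s := by
  have hnonneg : 0 ≤ᵐ[μ] fun s => hammingCost s (axisRetraction i j s) :=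
    .of_forall fun s => hammingCost_nonneg s _
  have hzero : ∫ s, hammingCost s (axisRetraction i j s) ∂μ = 0 := by
    refine le_antisymm ?_ (integral_nonneg_of_ae hnonneg)
    simp only [hammingCost_axisRetraction]
    rw [integral_sub .of_finite .of_finite]
    linarith
  filter_upwards [(integral_eq_zero_iff_of_nonneg_ae hnonneg .of_finite).1 hzero] with s hs
  exact (hammingDist_eq_zero.1 (Nat.cast_eq_zero.1 hs)).symm

lemma integral_hammingCost_bot_map_axisRetraction (μ : Measure (ι → Bool)) :
    ∫ s, hammingCost s ⊥ ∂μ.map (axisRetraction i j) = ∫ s, max (bit i s) (bit j s) ∂μ := by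
  rw [integral_map Measurable.of_discrete.aemeasurable .of_discrete]
  simp only [hammingCost_axisRetraction_bot]

lemma transportCost_hammingCost_map_axisRetraction_le (μ : Measure (ι → Bool))
    [IsProbabilityMeasure μ] :
    transportCost hammingCost μ (μ.map (axisRetraction i j)) ≤
      ∫ s, hammingCost s ⊥ ∂μ - ∫ s, max (bit i s) (bit j s) ∂μ := by
  have h := transportCost_map_le hammingCost_nonneg isCost_hammingCost.measurable μ measurable_id
    (Measurable.of_discrete (f := axisRetraction i j))
  simp only [Measure.map_id, id_eq, hammingCost_axisRetraction] at h
  rwa [integral_sub .of_finite .of_finite] at h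

end Axes

section FixingDirac

variable {Ψ : Measure (ι → Bool) → Measure (ι → Bool)}
  (hΨ : IsTransportIsometry hammingCost Ψ)
  (hdirac : ∀ s, Ψ (Measure.dirac s) = Measure.dirac s)
include hΨ hdirac

lemma integral_bit_eq (k : ι) (μ : Measure (ι → Bool)) [IsProbabilityMeasure μ] :
    ∫ s, bit k s ∂Ψ μ = ∫ s, bit k s ∂μ := by
  classical
  have := hΨ.isProbabilityMeasure μ inferInstance
  have hbit : bit k = fun s => (hammingCost s ⊥ - hammingCost s (atom k) + 1) / 2 := by
    ext s
    linarith [hammingCost_atom k s]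
  have hbot := hΨ.integral_eq isCost_hammingCost μ (hdirac ⊥)
  have hatom := hΨ.integral_eq isCost_hammingCost μ (hdirac (atom k))
  rw [hbit, integral_div, integral_div, integral_add .of_finite .of_finite,
    integral_add .of_finite .of_finite, integral_sub .of_finite .of_finite,
    integral_sub .of_finite .of_finite, hbot, hatom, integral_const, integral_const,
    probReal_univ, probReal_univ]

/-- Compare `κ` with the preimage `ν` of the law `δ` on the axes with twice the weights of `κ`: the
coin toss bounds the cost from `κ` to `ν` from above, duality bounds that from `Ψ κ` to `δ` from
below. -/
lemma eq_of_axisRetraction_eq [DecidableEq ι] {i j : ι} (hij : i ≠ j) {κ : Measure (ι → Bool)}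
    [IsProbabilityMeasure κ] (hκ : ∀ᵐ s ∂κ, axisRetraction i j s = s)
    (hmass : ∫ s, hammingCost s ⊥ ∂κ ≤ 1 / 2) :
    Ψ κ = κ := by
  have hk := isCost_hammingCost (ι := ι)
  have := hΨ.isProbabilityMeasure κ inferInstance
  have hi : 0 ≤ 2 * ∫ s, bit i s ∂κ := mul_nonneg two_pos.le (integral_nonneg (bit_nonneg i))
  have hj : 0 ≤ 2 * ∫ s, bit j s ∂κ := mul_nonneg two_pos.le (integral_nonneg (bit_nonneg j))
  have hκmass := integral_hammingCost_bot_of_axisRetraction_eq hij hκ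
  have hle : 2 * ∫ s, bit i s ∂κ + 2 * ∫ s, bit j s ∂κ ≤ 1 := by linarith
  set δ := axisMeasure i j (2 * ∫ s, bit i s ∂κ) (2 * ∫ s, bit j s ∂κ)
  have hδaxis : ∀ᵐ s ∂δ, axisRetraction i j s = s := ae_axisMeasure i j _ _
  have : IsProbabilityMeasure δ := isProbabilityMeasure_axisMeasure hi hj hle
  have hδmass := integral_hammingCost_bot_of_axisRetraction_eq hij hδaxis
  have hδi := integral_bit_left_axisMeasure hij hi hj hle
  have hδj := integral_bit_right_axisMeasure hij hi hj hle
  obtain ⟨ν, hν, hνδ⟩ := hΨ.exists_eq δ inferInstance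
  have hνmass : ∫ s, hammingCost s ⊥ ∂δ = ∫ s, hammingCost s ⊥ ∂ν :=
    hνδ ▸ hΨ.integral_eq hk ν (hdirac ⊥)
  have hupper : transportCost hammingCost κ ν ≤
      ∫ s, hammingCost s ⊥ ∂δ - ∫ s, hammingCost s ⊥ ∂κ := by
    rw [hνmass]
    refine transportCost_hammingCost_le_of_integral_bit_eq_two_mul hij hκ ?_ ?_
    · rw [← integral_bit_eq hΨ hdirac, hνδ, hδi]
    · rw [← integral_bit_eq hΨ hdirac, hνδ, hδj]
  have hlower : ∫ s, hammingCost s ⊥ ∂Ψ κ - 2 * ∫ s, max (bit i s) (bit j s) ∂Ψ κ +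
      ∫ s, hammingCost s ⊥ ∂δ ≤ transportCost hammingCost κ ν := by
    rw [← hΨ.transportCost_eq κ ν inferInstance hν, hνδ]
    exact le_transportCost_hammingCost_of_axisRetraction_eq hδaxis
  have hΨκ := ae_axisRetraction_eq_of_integral_le (i := i) (j := j) (μ := Ψ κ)
    (by linarith [hΨ.integral_eq hk κ (hdirac ⊥), hδmass])
  exact eq_of_integral_bit_eq hij hΨκ hκ (integral_bit_eq hΨ hdirac i κ)
    (integral_bit_eq hΨ hdirac j κ)

lemma ae_apply_eq_apply_bernoulliMeasure_top_bot {m : I} (hm : (m : ℝ) ≤ 1 / 4) (i j : ι) :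
    ∀ᵐ s ∂Ψ Ber(⊤, ⊥, m), s i = s j := by
  classical
  rcases eq_or_ne i j with rfl | hij
  · exact .of_forall fun _ => rfl
  set η : Measure (ι → Bool) := Ber(⊤, ⊥, m)
  have := hΨ.isProbabilityMeasure η inferInstance
  have hbit (k : ι) : ∫ s, bit k s ∂Ψ η = m := by
    rw [integral_bit_eq hΨ hdirac, integral_bernoulliMeasure, bit_top, bit_bot]
    simp
  have hmaxη : ∫ s, max (bit i s) (bit j s) ∂η = m := by
    simp [η, integral_bernoulliMeasure, bit_top, bit_bot]
  have hR : Measurable (axisRetraction i j) := .of_discrete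
  set κ := (Ψ η).map (axisRetraction i j)
  have : IsProbabilityMeasure κ := Measure.isProbabilityMeasure_map hR.aemeasurable
  have hκaxis : ∀ᵐ s ∂κ, axisRetraction i j s = s :=
    (ae_map_iff hR.aemeasurable .of_discrete).2 (.of_forall (axisRetraction_idem i j))
  have hκmass : ∫ s, hammingCost s ⊥ ∂κ = ∫ s, max (bit i s) (bit j s) ∂Ψ η :=
    integral_hammingCost_bot_map_axisRetraction _
  have hmax : ∫ s, max (bit i s) (bit j s) ∂Ψ η ≤ 2 * m := by
    rw [two_mul]
    nth_rw 1 [← hbit i]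
    rw [← hbit j, ← integral_add .of_finite .of_finite]
    exact integral_mono .of_finite .of_finite fun s =>
      max_le_add_of_nonneg (bit_nonneg i s) (bit_nonneg j s)
  have hfixed : Ψ κ = κ := eq_of_axisRetraction_eq hΨ hdirac hij hκaxis (by linarith)
  have hupper : transportCost hammingCost (Ψ η) κ ≤
      ∫ s, hammingCost s ⊥ ∂Ψ η - ∫ s, max (bit i s) (bit j s) ∂Ψ η :=
    transportCost_hammingCost_map_axisRetraction_le _
  have hlower : ∫ s, hammingCost s ⊥ ∂Ψ η - 2 * m + ∫ s, max (bit i s) (bit j s) ∂Ψ η ≤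
      transportCost hammingCost η κ := by
    rw [← hκmass, ← hmaxη, hΨ.integral_eq isCost_hammingCost η (hdirac ⊥)]
    exact le_transportCost_hammingCost_of_axisRetraction_eq hκaxis
  rw [← hΨ.transportCost_eq η κ inferInstance inferInstance, hfixed] at hlower
  exact ae_apply_eq_apply_of_integral_max_le (by linarith [hbit i]) (by linarith [hbit j])

lemma bernoulliMeasure_top_bot_eq [Nonempty ι] {m : I} (hm : (m : ℝ) ≤ 1 / 4) :
    Ψ Ber(⊤, ⊥, m) = Ber(⊤, ⊥, m) := by
  have := hΨ.isProbabilityMeasure Ber(⊤, ⊥, m) inferInstance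
  obtain ⟨i⟩ := ‹Nonempty ι›
  refine eq_bernoulliMeasure ?_ (f := bit i) ?_ (integral_bit_eq hΨ hdirac i _)
  · have hall : ∀ᵐ s ∂Ψ Ber(⊤, ⊥, m), ∀ j, s j = s i := ae_all_iff.2 fun j =>
      ae_apply_eq_apply_bernoulliMeasure_top_bot hΨ hdirac hm j i
    filter_upwards [hall] with s hs
    rcases hi : s i
    · exact .inr (funext fun j => (hs j).trans hi)
    · exact .inl (funext fun j => (hs j).trans hi)
  · rw [bit_top, bit_bot]
    exact one_ne_zero

end FixingDirac

end CubeIsometry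

section CubeInTorus

variable {n : ℕ}

/-- The embedding of the cube in the torus as the set of points each of whose coordinates agrees
with that of `x` or that of `antipode x`. -/
noncomputable def cubeVertex (x : Torus n) (s : Fin n → Bool) : Torus n :=
  fun k => if s k then x k else antipode x k

lemma cubeVertex_top (x : Torus n) : cubeVertex x ⊤ = x :=
  funext fun _ => if_pos rfl

lemma cubeVertex_bot (x : Torus n) : cubeVertex x ⊥ = antipode x :=
  funext fun _ => if_neg Bool.false_ne_true

lemma sqDist_cubeVertex (x : Torus n) (s t : Fin n → Bool) :
    sqDist (cubeVertex x s) (cubeVertex x t) = 1 / 4 * hammingCost s t := by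
  have hx (k : Fin n) : ‖x k - antipode x k‖ = 1 / 2 := by
    rw [norm_sub_antipode, sub_self, norm_zero, sub_zero]
  rw [sqDist, hammingCost_eq_sum, Finset.mul_sum]
  refine Finset.sum_congr rfl fun k _ => ?_
  rcases hs : s k <;> rcases ht : t k <;>
    norm_num [cubeVertex, hs, ht, hx, norm_sub_rev (antipode x k)]

lemma cubeVertex_injective (x : Torus n) : Injective (cubeVertex x) := fun s t hst => by
  have h := sqDist_cubeVertex x s t
  rw [sqDist_eq_zero_iff.2 hst, zero_eq_mul, or_iff_right (by norm_num)] at h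
  exact hammingDist_eq_zero.1 (Nat.cast_eq_zero.1 h)

lemma measurableEmbedding_cubeVertex (x : Torus n) : MeasurableEmbedding (cubeVertex x) :=
  Measurable.of_discrete.measurableEmbedding (cubeVertex_injective x)

lemma mem_range_cubeVertex_iff {x y : Torus n} :
    y ∈ Set.range (cubeVertex x) ↔ sqDist y x + sqDist y (antipode x) = n / 4 := by
  have hcoord (k : Fin n) :
      ‖y k - x k‖ * (1 / 2 - ‖y k - x k‖) = 0 ↔ y k = x k ∨ y k = antipode x k := by
    rw [← norm_sub_antipode, mul_eq_zero, norm_eq_zero, norm_eq_zero, sub_eq_zero, sub_eq_zero]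
  rw [sqDist_add_sqDist_antipode, sub_eq_self, mul_eq_zero, or_iff_right two_ne_zero,
    Finset.sum_eq_zero_iff_of_nonneg fun k _ => norm_mul_half_sub_nonneg _]
  simp only [Finset.mem_univ, true_implies, hcoord]
  classical
  refine ⟨?_, fun h => ⟨fun k => decide (y k = x k), funext fun k => ?_⟩⟩
  · rintro ⟨s, rfl⟩ k
    unfold cubeVertex
    split_ifs
    exacts [.inl rfl, .inr rfl]
  · by_cases hk : y k = x k
    · simp [cubeVertex, hk]
    · rw [cubeVertex, if_neg (by simpa using hk), (h k).resolve_left hk]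

variable [NeZero n] {p : ℝ} {Φ : Measure (Torus n) → Measure (Torus n)}

lemma ae_mem_range_cubeVertex_iff
    (hΦ : IsTransportIsometry (fun x y : Torus n => torusDist x y ^ (2 : ℝ)) Φ)
    (hdirac : ∀ x, Φ (Measure.dirac x) = Measure.dirac x) (x : Torus n)
    (μ : Measure (Torus n)) [IsProbabilityMeasure μ] :
    (∀ᵐ y ∂Φ μ, y ∈ Set.range (cubeVertex x)) ↔ ∀ᵐ y ∂μ, y ∈ Set.range (cubeVertex x) := by
  have := hΦ.isProbabilityMeasure μ inferInstance
  have hspan : (fun y => sqDist y x + sqDist y (antipode x)) ∈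
      Submodule.span ℝ (Set.range fun z y : Torus n => torusDist y z ^ (2 : ℝ)) := by
    simp only [torusDist_rpow, div_self (two_ne_zero' ℝ), Real.rpow_one]
    exact Submodule.add_mem _ (Submodule.subset_span ⟨x, rfl⟩)
      (Submodule.subset_span ⟨antipode x, rfl⟩)
  obtain ⟨hint, hint', heq⟩ := hΦ.integrable_and_integral_eq_of_mem_span
    (isAntipodalCost_torusDist two_pos).isCost hdirac μ hspan
  have hle := sqDist_add_sqDist_antipode_le x
  simp only [mem_range_cubeVertex_iff]
  rw [← integral_eq_iff_ae_eq_of_le hint hle, ← integral_eq_iff_ae_eq_of_le hint' hle, heq]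

lemma bernoulliMeasure_eq_of_eq_two
    (hΦ : IsTransportIsometry (fun x y : Torus n => torusDist x y ^ (2 : ℝ)) Φ)
    (hdirac : ∀ x, Φ (Measure.dirac x) = Measure.dirac x) (x : Torus n) {m : I}
    (hm : (m : ℝ) ≤ 1 / 4) : Φ Ber(x, antipode x, m) = Ber(x, antipode x, m) := by
  have he := measurableEmbedding_cubeVertex x
  have hΨ := hΦ.comap (isAntipodalCost_torusDist two_pos).isCost he fun μ hμ =>
    ae_mem_range_cubeVertex_iff hΦ hdirac x μ
  simp only [torusDist_rpow, div_self (two_ne_zero' ℝ), Real.rpow_one, sqDist_cubeVertex] at hΨ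
  have hΨdirac (s : Fin n → Bool) :
      (Φ ((Measure.dirac s).map (cubeVertex x))).comap (cubeVertex x) = Measure.dirac s := by
    rw [Measure.map_dirac' he.measurable, hdirac, ← Measure.map_dirac' he.measurable, he.comap_map]
  have hmap : Ber(⊤, ⊥, m).map (cubeVertex x) = Ber(x, antipode x, m) := by
    rw [map_bernoulliMeasure' _ _ he.measurable, cubeVertex_top, cubeVertex_bot]
  have hrange : ∀ᵐ y ∂Φ Ber(x, antipode x, m), y ∈ Set.range (cubeVertex x) := by
    rw [ae_mem_range_cubeVertex_iff hΦ hdirac, ← hmap]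
    exact he.ae_map_iff.2 (.of_forall Set.mem_range_self)
  have h := congrArg (Measure.map (cubeVertex x))
    (bernoulliMeasure_top_bot_eq (hΨ.of_const_mul (by norm_num)) hΨdirac hm)
  rwa [hmap, map_comap_of_ae_mem_range he hrange] at h

lemma bernoulliMeasure_antipode_eq (hp : 0 < p) (hnp : 2 ≤ n ∨ 2 ≤ p)
    (hΦ : IsTransportIsometry (fun x y : Torus n => torusDist x y ^ p) Φ)
    (hdirac : ∀ x, Φ (Measure.dirac x) = Measure.dirac x) (x : Torus n) {m : I}
    (hm : (m : ℝ) ≤ 1 / 4) : Φ Ber(x, antipode x, m) = Ber(x, antipode x, m) := by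
  rcases lt_trichotomy p 2 with hp2 | rfl | hp2
  · exact bernoulliMeasure_eq_of_lt_two hp hp2 (hnp.resolve_right hp2.not_ge) hΦ hdirac x m
  · exact bernoulliMeasure_eq_of_eq_two hΦ hdirac x hm
  · exact bernoulliMeasure_eq_of_two_lt hp2 hΦ hdirac x m

end CubeInTorus

end WassersteinTorus

open WassersteinTorus in
theorem wasserstein_torus_rigid_general {n : ℕ} [NeZero n] {p : ℝ} (hp : 0 < p)
    (hnp : 2 ≤ n ∨ 2 ≤ p) (Φ : Measure (Torus n) → Measure (Torus n))
    (hbij : Set.BijOn Φ {μ : Measure (Torus n) | IsProbabilityMeasure μ}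
      {μ : Measure (Torus n) | IsProbabilityMeasure μ})
    (hiso : ∀ μ ν : Measure (Torus n), IsProbabilityMeasure μ → IsProbabilityMeasure ν →
      wassersteinDist torusDist p (Φ μ) (Φ ν) = wassersteinDist torusDist p μ ν) :
    ∃ ψ : Torus n → Torus n, Function.Bijective ψ ∧
      (∀ x y : Torus n, torusDist (ψ x) (ψ y) = torusDist x y) ∧
      ∀ μ : Measure (Torus n), IsProbabilityMeasure μ → Φ μ = μ.map ψ := by
  have hd (x y : Torus n) : 0 ≤ torusDist x y := Real.sqrt_nonneg _
  have hΦ := IsTransportIsometry.of_wassersteinDist_eq hd hp.ne' hbij hiso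
  have := perfectSpace_torus (n := n)
  obtain ⟨ψ, hψ, hψp, hΦψ⟩ := (isAntipodalCost_torusDist hp).exists_eq_map (ε := 1 / 4)
    (by norm_num) (fun Ψ hΨ hdirac x _ => bernoulliMeasure_antipode_eq hp hnp hΨ hdirac x) hΦ
  exact ⟨ψ, hψ, fun x y => (Real.rpow_left_inj (hd _ _) (hd _ _) hp.ne').1 (hψp x y), hΦψ⟩

/-- Isometric rigidity of the Wasserstein torus: every isometry `Φ` of
`W_p(𝕋ⁿ)` (`n ≥ 2`, `p ≥ 1`) is the push-forward by an isometry `ψ` of the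
flat torus `𝕋ⁿ`, i.e. `Φ(μ) = ψ_#μ` for all `μ`. -/
theorem wasserstein_torus_rigid {n : ℕ} (hn : 2 ≤ n) {p : ℝ} (hp : 1 ≤ p)
    (Φ : Measure (Torus n) → Measure (Torus n))
    (hbij : Set.BijOn Φ {μ : Measure (Torus n) | IsProbabilityMeasure μ}
      {μ : Measure (Torus n) | IsProbabilityMeasure μ})
    (hiso : ∀ μ ν : Measure (Torus n), IsProbabilityMeasure μ → IsProbabilityMeasure ν →
      wassersteinDist torusDist p (Φ μ) (Φ ν) = wassersteinDist torusDist p μ ν) :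
    ∃ ψ : Torus n → Torus n, Function.Bijective ψ ∧
      (∀ x y : Torus n, torusDist (ψ x) (ψ y) = torusDist x y) ∧
      ∀ μ : Measure (Torus n), IsProbabilityMeasure μ → Φ μ = μ.map ψ := by
  have : NeZero n := ⟨by omega⟩
  exact wasserstein_torus_rigid_general (zero_lt_one.trans_le hp) (.inl hn) Φ hbij hiso
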